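/- arXiv:2212.10871 — 2 statements merged into one kernel-verified Lean document; each statement's English description precedes it below -/
import Mathlib

section
/- Let (p_k)_{k≥0} be a critical offspring distribution with span 1, variance σ² ∈ (0,∞), and ∑_{k≥0} k^{2+δ} p_k < ∞ for some δ ∈ (0,1]. Then the tree-size probabilities satisfy q_n = (2πσ²)^{-1/2} n^{-3/2} + O(n^{-3/2-δ/2}) as n → ∞. -/
open Filter Asymptotics

theorem PowerSeries.summable_norm_coeff_pow {𝕜 : Type*} [RCLike 𝕜] {A : PowerSeries 𝕜}
    (hA : Summable fun n => ‖PowerSeries.coeff n A‖) (k : ℕ) :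
    Summable fun n => ‖PowerSeries.coeff n (A ^ k)‖ := by
  induction k with
  | zero =>
    refine summable_of_ne_finset_zero (s := {0}) fun n hn => ?_
    simp only [Finset.mem_singleton] at hn
    simp [PowerSeries.coeff_one, hn]
  | succ k ih =>
    simp only [pow_succ, PowerSeries.coeff_mul]
    exact summable_norm_sum_mul_antidiagonal_of_summable_norm
      (f := fun n => PowerSeries.coeff n (A ^ k)) (g := fun n => PowerSeries.coeff n A) ih hA

theorem PowerSeries.tsum_coeff_pow_mul {𝕜 : Type*} [RCLike 𝕜] {A : PowerSeries 𝕜}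
    (hA : Summable fun n => ‖PowerSeries.coeff n A‖) {z : 𝕜} (hz : ‖z‖ ≤ 1) (k : ℕ) :
    ∑' n, PowerSeries.coeff n (A ^ k) * z ^ n = (∑' n, PowerSeries.coeff n A * z ^ n) ^ k := by
  have key : ∀ B : PowerSeries 𝕜, Summable (fun n => ‖PowerSeries.coeff n B‖) →
      Summable (fun n => ‖PowerSeries.coeff n B * z ^ n‖) := by
    intro B hB
    refine Summable.of_nonneg_of_le (fun _ => norm_nonneg _) (fun n => ?_) hB
    rw [norm_mul, norm_pow]
    exact mul_le_of_le_one_right (norm_nonneg _) (pow_le_one₀ (norm_nonneg _) hz)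
  induction k with
  | zero =>
    rw [tsum_eq_single 0]
    · simp
    · intro n hn
      simp [PowerSeries.coeff_one, hn]
  | succ k ih =>
    rw [pow_succ (∑' n, PowerSeries.coeff n A * z ^ n), ← ih, tsum_mul_tsum_eq_tsum_sum_antidiagonal_of_summable_norm
      (key _ (PowerSeries.summable_norm_coeff_pow hA k)) (key _ hA)]
    refine tsum_congr fun n => ?_
    rw [pow_succ, PowerSeries.coeff_mul, Finset.sum_mul]
    refine Finset.sum_congr rfl fun x hx => ?_
    rw [← Finset.HasAntidiagonal.mem_antidiagonal.mp hx, pow_add]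
    ring

theorem eq_of_tsum_mul_pow_eq {a b : ℕ → ℝ} (ha : Summable fun n => ‖a n‖)
    (hb : Summable fun n => ‖b n‖)
    (h : ∀ z ∈ Set.Icc (0:ℝ) 1, ∑' n, a n * z ^ n = ∑' n, b n * z ^ n) : a = b := by
  have hs : ∀ c : ℕ → ℝ, (Summable fun n => ‖c n‖) → HasFPowerSeriesAt
      (fun z => ∑' n, c n * z ^ n) (FormalMultilinearSeries.ofScalars ℝ c) (0:ℝ) := by
    intro c hc
    rw [hasFPowerSeriesAt_iff]
    filter_upwards [Metric.ball_mem_nhds (0:ℝ) one_pos] with z hz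
    have hz' : ‖z‖ ≤ 1 := by simpa using (mem_ball_zero_iff.mp hz).le
    have : Summable fun n => c n * z ^ n := by
      refine Summable.of_norm_bounded hc fun n => ?_
      rw [norm_mul, norm_pow]
      exact mul_le_of_le_one_right (norm_nonneg _) (pow_le_one₀ (norm_nonneg _) hz')
    simpa [mul_comm] using this.hasSum
  have h1 := hs a ha
  have h2 := hs b hb
  have hev : (fun z : ℝ => ∑' n, a n * z ^ n) =ᶠ[nhds 0] fun z => ∑' n, b n * z ^ n := by
    refine (AnalyticAt.frequently_eq_iff_eventually_eq h1.analyticAt h2.analyticAt).mp ?_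
    have : ∃ᶠ z : ℝ in nhdsWithin 0 (Set.Ioi 0), ∑' n, a n * z ^ n = ∑' n, b n * z ^ n := by
      refine Eventually.frequently ?_
      filter_upwards [Ioo_mem_nhdsGT (one_pos : (0:ℝ) < 1)] with z hz
      exact h z ⟨hz.1.le, hz.2.le⟩
    exact this.filter_mono (nhdsWithin_mono _ fun x hx => ne_of_gt hx)
  have h3 := (h1.congr hev).eq_formalMultilinearSeries h2
  funext n
  have := congrArg (fun s => FormalMultilinearSeries.coeff s n) h3
  simpa using this

theorem PowerSeries.coeff_mul_eq_sum_range {R : Type*} [CommSemiring R] (A G : PowerSeries R)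
    (n : ℕ) : PowerSeries.coeff n (A * G) = ∑ k ∈ Finset.range (n + 1),
      PowerSeries.coeff k A * PowerSeries.coeff n (PowerSeries.X ^ k * G) := by
  rw [PowerSeries.coeff_mul, Finset.Nat.sum_antidiagonal_eq_sum_range_succ
    (fun i j => PowerSeries.coeff i A * PowerSeries.coeff j G)]
  refine Finset.sum_congr rfl fun k hk => ?_
  rw [PowerSeries.coeff_X_pow_mul', if_pos (by simpa [Nat.lt_succ_iff] using hk)]

theorem PowerSeries.coeff_pow_of_lt {R : Type*} [CommSemiring R] {Q : PowerSeries R}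
    (h0 : PowerSeries.coeff 0 Q = 0) {n k : ℕ} (hnk : n < k) :
    PowerSeries.coeff n (Q ^ k) = 0 := by
  have : (PowerSeries.X : PowerSeries R) ∣ Q := by
    rw [PowerSeries.X_dvd_iff, ← PowerSeries.coeff_zero_eq_constantCoeff_apply, h0]
  exact PowerSeries.X_pow_dvd_iff.mp (pow_dvd_pow_of_dvd this k) n hnk

/-- Lagrange inversion for `Q = X * P(Q)`, the functional equation being given coefficientwise. -/
theorem PowerSeries.lagrange_inversion {P Q : PowerSeries ℝ}
    (h0 : PowerSeries.coeff 0 Q = 0)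
    (hQ : ∀ n, PowerSeries.coeff (n + 1) Q = ∑ k ∈ Finset.range (n + 1),
      PowerSeries.coeff k P * PowerSeries.coeff n (Q ^ k)) (n m : ℕ) :
    (n : ℝ) * PowerSeries.coeff n (Q ^ m) =
      m * PowerSeries.coeff n (PowerSeries.X ^ m * P ^ n) := by
  have hstep : ∀ n m, PowerSeries.coeff (n + 1) (Q ^ (m + 1)) = ∑ k ∈ Finset.range (n + 1),
      PowerSeries.coeff k P * PowerSeries.coeff n (Q ^ (m + k)) := by
    intro n m
    have hco : ∀ i ≤ n + 1, PowerSeries.coeff i Q = PowerSeries.coeff i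
        (PowerSeries.X * ∑ k ∈ Finset.range (n + 1), PowerSeries.C (PowerSeries.coeff k P) * Q ^ k)
        := by
      intro i hi
      cases i with
      | zero => simpa using h0
      | succ i =>
        rw [PowerSeries.coeff_succ_X_mul, map_sum, hQ]
        simp only [PowerSeries.coeff_C_mul]
        refine Finset.sum_subset (Finset.range_mono (by omega)) fun k _ hk => ?_
        rw [PowerSeries.coeff_pow_of_lt h0 (by simpa using hk), mul_zero]
    have : PowerSeries.coeff (n + 1) (Q ^ (m + 1)) = PowerSeries.coeff (n + 1) (PowerSeries.X *
        ((∑ k ∈ Finset.range (n + 1), PowerSeries.C (PowerSeries.coeff k P) * Q ^ k) * Q ^ m)) := by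
      rw [← mul_assoc, pow_succ', PowerSeries.coeff_mul, PowerSeries.coeff_mul]
      refine Finset.sum_congr rfl fun x hx => ?_
      rw [hco x.1 (by rw [Finset.HasAntidiagonal.mem_antidiagonal] at hx; omega)]
    rw [this, PowerSeries.coeff_succ_X_mul, Finset.sum_mul, map_sum]
    refine Finset.sum_congr rfl fun k _ => ?_
    rw [mul_assoc, PowerSeries.coeff_C_mul, ← pow_add, add_comm]
  induction n generalizing m with
  | zero =>
    cases m with
    | zero => simp
    | succ m => simp
  | succ n ih =>
    cases m with
    | zero => simp [PowerSeries.coeff_one]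
    | succ m =>
      rw [hstep, pow_succ' PowerSeries.X, mul_assoc, PowerSeries.coeff_succ_X_mul]
      rcases Nat.eq_zero_or_pos n with rfl | hn
      · cases m with
        | zero => simp
        | succ m =>
          have h0' : PowerSeries.constantCoeff Q = 0 := by simpa using h0
          simp [h0', PowerSeries.coeff_X_pow_mul']
      · set H := PowerSeries.X ^ m * P ^ (n + 1) with hH
        have e1 : (n : ℝ) * ∑ k ∈ Finset.range (n + 1),
            PowerSeries.coeff k P * PowerSeries.coeff n (Q ^ (m + k)) = PowerSeries.coeff n
              (((m : PowerSeries ℝ) * P + PowerSeries.X * PowerSeries.derivative ℝ P) *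
                (PowerSeries.X ^ m * P ^ n)) := by
          rw [PowerSeries.coeff_mul_eq_sum_range, Finset.mul_sum]
          refine Finset.sum_congr rfl fun k _ => ?_
          have hc : PowerSeries.coeff k
              ((m : PowerSeries ℝ) * P + PowerSeries.X * PowerSeries.derivative ℝ P) =
                (m + k) * PowerSeries.coeff k P := by
            rw [map_add, ← map_natCast (PowerSeries.C (R := ℝ)), PowerSeries.coeff_C_mul]
            cases k with
            | zero => simp
            | succ k =>
              rw [PowerSeries.coeff_succ_X_mul, PowerSeries.coeff_derivative]
              push_cast
              ring
          rw [hc, mul_left_comm, ih (m + k), ← mul_assoc (PowerSeries.X ^ k), ← pow_add,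
            add_comm k m]
          push_cast
          ring
        have hXD : PowerSeries.coeff n (PowerSeries.X * PowerSeries.derivative ℝ H) =
            n * PowerSeries.coeff n H := by
          obtain ⟨n, rfl⟩ := Nat.exists_eq_succ_of_ne_zero hn.ne'
          rw [Nat.succ_eq_add_one, PowerSeries.coeff_succ_X_mul, PowerSeries.coeff_derivative]
          push_cast
          ring
        have hXm : PowerSeries.X * PowerSeries.derivative ℝ (PowerSeries.X ^ m : PowerSeries ℝ) =
            (m : PowerSeries ℝ) * PowerSeries.X ^ m := by
          rw [PowerSeries.derivative_pow, PowerSeries.derivative_X]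
          cases m with
          | zero => simp
          | succ m =>
            rw [Nat.add_sub_cancel, pow_succ]
            ring
        have hDH : PowerSeries.X * PowerSeries.derivative ℝ H + (n * m : PowerSeries ℝ) * H =
            (n + 1 : PowerSeries ℝ) *
            (((m : PowerSeries ℝ) * P + PowerSeries.X * PowerSeries.derivative ℝ P) *
                (PowerSeries.X ^ m * P ^ n)) := by
          have : PowerSeries.derivative ℝ H = PowerSeries.X ^ m *
              ((n + 1 : PowerSeries ℝ) * P ^ n * PowerSeries.derivative ℝ P) +
              P ^ (n + 1) * PowerSeries.derivative ℝ (PowerSeries.X ^ m : PowerSeries ℝ) := by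
            rw [hH, Derivation.leibniz, PowerSeries.derivative_pow]
            simp [smul_eq_mul]
          rw [this, hH]
          linear_combination P ^ (n + 1) * hXm
        have e2 := congrArg (PowerSeries.coeff n) hDH
        have c1 : (n * m : PowerSeries ℝ) = PowerSeries.C (n * m : ℝ) := by simp
        have c2 : (n + 1 : PowerSeries ℝ) = PowerSeries.C (n + 1 : ℝ) := by simp
        rw [map_add, hXD, c1, c2, PowerSeries.coeff_C_mul, PowerSeries.coeff_C_mul, ← e1] at e2
        have hn' : (n : ℝ) ≠ 0 := by exact_mod_cast hn.ne'
        apply mul_left_cancel₀ hn'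
        push_cast
        linear_combination -e2

theorem integral_tsum_exp_mul_exp {a : ℕ → ℂ} (ha : Summable fun n => ‖a n‖) (m : ℕ) :
    ∫ θ in (-Real.pi)..Real.pi, (∑' j, a j * Complex.exp (Complex.I * θ) ^ j) *
      Complex.exp (-(Complex.I * m * θ)) = 2 * Real.pi * a m := by
  let f : ℕ → C(ℝ, ℂ) := fun j =>
    ⟨fun θ => a j * (Complex.exp (Complex.I * θ) ^ j * Complex.exp (-(Complex.I * m * θ))),
      by fun_prop⟩
  have hexp : ∀ (j : ℕ) (θ : ℝ), Complex.exp (Complex.I * θ) ^ j *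
      Complex.exp (-(Complex.I * m * θ)) = Complex.exp (Complex.I * ((j : ℂ) - m) * θ) := by
    intro j θ
    rw [← Complex.exp_nat_mul, ← Complex.exp_add]
    ring_nf
  have hnorm : ∀ (j : ℕ) (θ : ℝ), ‖f j θ‖ = ‖a j‖ := by
    intro j θ
    simp only [f, ContinuousMap.coe_mk]
    rw [hexp, norm_mul]
    have : Complex.I * ((j : ℂ) - m) * θ = ((((j : ℝ) - m) * θ : ℝ) : ℂ) * Complex.I := by
      push_cast; ring
    rw [this, Complex.norm_exp_ofReal_mul_I, mul_one]
  have hf : Summable fun j => ‖(f j).restrict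
      (⟨Set.uIcc (-Real.pi) Real.pi, isCompact_uIcc⟩ : TopologicalSpace.Compacts ℝ)‖ := by
    refine Summable.of_nonneg_of_le (fun _ => norm_nonneg _) (fun j => ?_) ha
    rw [ContinuousMap.norm_le _ (norm_nonneg _)]
    intro x
    exact (hnorm j x).le
  have hsum := intervalIntegral.tsum_intervalIntegral_eq_of_summable_norm hf
  have hL : ∀ θ : ℝ, (∑' j, a j * Complex.exp (Complex.I * θ) ^ j) *
      Complex.exp (-(Complex.I * m * θ)) = ∑' j, f j θ := by
    intro θ
    rw [← tsum_mul_right]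
    refine tsum_congr fun j => ?_
    simp only [f, ContinuousMap.coe_mk]
    ring
  simp_rw [hL]
  rw [← hsum, tsum_eq_single m]
  · simp only [f, ContinuousMap.coe_mk, hexp]
    simp only [sub_self, mul_zero, zero_mul, Complex.exp_zero, mul_one,
      intervalIntegral.integral_const, sub_neg_eq_add, Complex.real_smul]
    push_cast
    ring
  · intro j hj
    simp only [f, ContinuousMap.coe_mk, hexp]
    have hc : Complex.I * ((j : ℂ) - m) ≠ 0 := by
      refine mul_ne_zero Complex.I_ne_zero (sub_ne_zero.mpr ?_)
      exact_mod_cast hj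
    rw [intervalIntegral.integral_const_mul, integral_exp_mul_complex hc]
    have : Complex.exp (Complex.I * ((j : ℂ) - m) * Real.pi) =
        Complex.exp (Complex.I * ((j : ℂ) - m) * (-Real.pi : ℝ)) := by
      rw [Complex.exp_eq_exp_iff_exists_int]
      refine ⟨(j : ℤ) - m, ?_⟩
      push_cast
      ring
    rw [this]
    simp

theorem norm_pow_succ_sub_pow_succ_le {a b : ℂ} {r : ℝ} (ha : ‖a‖ ≤ r) (hb : ‖b‖ ≤ r) (n : ℕ) :
    ‖a ^ (n + 1) - b ^ (n + 1)‖ ≤ (n + 1) * ‖a - b‖ * r ^ n := by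
  have hr : 0 ≤ r := (norm_nonneg _).trans ha
  induction n with
  | zero => simp
  | succ n ih =>
    have e : a ^ (n + 1 + 1) - b ^ (n + 1 + 1) =
        a * (a ^ (n + 1) - b ^ (n + 1)) + (a - b) * b ^ (n + 1) := by ring
    rw [e]
    calc _ ≤ ‖a‖ * ‖a ^ (n + 1) - b ^ (n + 1)‖ + ‖a - b‖ * ‖b‖ ^ (n + 1) := by
          refine (norm_add_le _ _).trans ?_
          rw [norm_mul, norm_mul, norm_pow]
      _ ≤ r * ((n + 1) * ‖a - b‖ * r ^ n) + ‖a - b‖ * r ^ (n + 1) := by gcongr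
      _ = _ := by push_cast; ring

/-- A factor `|θ| ^ r` against a Gaussian of width `n ^ (-1/2)` costs `n ^ (-r/2)`. -/
theorem abs_rpow_mul_exp_neg_le {c r n : ℝ} (hc : 0 < c) (hr0 : 0 ≤ r) (hr4 : r ≤ 4) (hn : 0 < n)
    (θ : ℝ) : |θ| ^ r * Real.exp (-(c * n) * θ ^ 2) ≤
      (1 + 8 / c ^ 2) * n ^ (-r / 2) * Real.exp (-(c * n / 2) * θ ^ 2) := by
  set x := √n * |θ| with hx
  have hx0 : 0 ≤ x := by positivity
  have hx2 : x ^ 2 = n * θ ^ 2 := by rw [hx, mul_pow, Real.sq_sqrt hn.le, sq_abs]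
  have h1 : |θ| ^ r = x ^ r * n ^ (-r / 2) := by
    rw [hx, Real.mul_rpow (by positivity) (by positivity), Real.sqrt_eq_rpow, ← Real.rpow_mul hn.le,
      mul_right_comm, ← Real.rpow_add hn]
    ring_nf
    simp
  have h2 : x ^ r ≤ 1 + x ^ 4 := by
    rcases le_total x 1 with h | h
    · have := Real.rpow_le_one hx0 h hr0
      have : 0 ≤ x ^ 4 := by positivity
      linarith
    · have : x ^ r ≤ x ^ (4 : ℝ) := Real.rpow_le_rpow_of_exponent_le h hr4
      have e : x ^ (4 : ℝ) = x ^ 4 := by exact_mod_cast Real.rpow_natCast x 4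
      exact (this.trans_eq e).trans (by linarith)
  have h3 : 1 + x ^ 4 ≤ (1 + 8 / c ^ 2) * Real.exp (c * n / 2 * θ ^ 2) := by
    have e1 := Real.pow_div_factorial_le_exp (c * n / 2 * θ ^ 2) (by positivity) 2
    have e2 := Real.one_le_exp (show 0 ≤ c * n / 2 * θ ^ 2 by positivity)
    have e3 : x ^ 4 = 8 / c ^ 2 * ((c * n / 2 * θ ^ 2) ^ 2 / (Nat.factorial 2 : ℕ)) := by
      rw [show x ^ 4 = (x ^ 2) ^ 2 by ring, hx2]
      simp only [Nat.factorial]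
      push_cast
      field_simp
      ring
    have : 8 / c ^ 2 * ((c * n / 2 * θ ^ 2) ^ 2 / (Nat.factorial 2 : ℕ)) ≤
        8 / c ^ 2 * Real.exp (c * n / 2 * θ ^ 2) := by gcongr
    linarith
  have h4 : Real.exp (-(c * n / 2) * θ ^ 2) =
      Real.exp (c * n / 2 * θ ^ 2) * Real.exp (-(c * n) * θ ^ 2) := by
    rw [← Real.exp_add]; ring_nf
  rw [h1, h4]
  calc _ ≤ (1 + 8 / c ^ 2) * Real.exp (c * n / 2 * θ ^ 2) * n ^ (-r / 2) *
        Real.exp (-(c * n) * θ ^ 2) := by gcongr; exact h2.trans h3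
    _ = _ := by ring

theorem exists_norm_le_exp_neg_mul_sq {ψ : ℝ → ℂ} (hψ : Continuous ψ) {s C δ : ℝ} (hs : 0 < s)
    (hδ : 0 < δ) (hexp : ∀ θ, ‖ψ θ - (1 - s * θ ^ 2 / 2 : ℝ)‖ ≤ C * |θ| ^ (2 + δ))
    (hlt : ∀ θ, 0 < |θ| → |θ| ≤ Real.pi → ‖ψ θ‖ < 1) :
    ∃ c, 0 < c ∧ c ≤ s / 2 ∧ ∀ θ, |θ| ≤ Real.pi → ‖ψ θ‖ ≤ Real.exp (-c * θ ^ 2) := by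
  obtain ⟨ε, hε0, hε1, hε⟩ : ∃ ε, 0 < ε ∧ ε ≤ 1 ∧ ∀ θ : ℝ, |θ| < ε →
      C * |θ| ^ δ ≤ s / 4 ∧ s * θ ^ 2 / 2 ≤ 1 := by
    have t1 : Tendsto (fun θ : ℝ => C * |θ| ^ δ) (nhds 0) (nhds (C * |(0:ℝ)| ^ δ)) := by
      refine Continuous.tendsto ?_ 0
      exact continuous_const.mul (continuous_abs.rpow_const fun _ => Or.inr hδ.le)
    have t2 : Tendsto (fun θ : ℝ => s * θ ^ 2 / 2) (nhds 0) (nhds (s * 0 ^ 2 / 2)) :=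
      Continuous.tendsto (by fun_prop) 0
    have e1 := t1.eventually_le_const (u := s / 4)
      (by rw [abs_zero, Real.zero_rpow hδ.ne', mul_zero]; positivity)
    have e2 := t2.eventually_le_const (u := 1) (by norm_num)
    obtain ⟨ε, hε, h⟩ := Metric.eventually_nhds_iff.mp (e1.and e2)
    refine ⟨min ε 1, by positivity, min_le_right _ _, fun θ hθ => h ?_⟩
    rw [Real.dist_eq, sub_zero]
    exact hθ.trans_le (min_le_left _ _)
  have hpi := Real.pi_gt_three
  have hcpt : IsCompact {θ : ℝ | ε ≤ |θ| ∧ |θ| ≤ Real.pi} := by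
    refine (isCompact_Icc (a := -Real.pi) (b := Real.pi)).of_isClosed_subset ?_
      fun θ hθ => abs_le.mp hθ.2
    exact (isClosed_le continuous_const continuous_abs).inter
      (isClosed_le continuous_abs continuous_const)
  obtain ⟨θ₀, hθ₀, hmax⟩ := hcpt.exists_isMaxOn
    ⟨Real.pi, by rw [Set.mem_ofPred_eq, abs_of_pos Real.pi_pos]; exact ⟨by linarith, le_rfl⟩⟩
    hψ.norm.continuousOn
  set ρ := max ‖ψ θ₀‖ (1 / 2) with hρ
  have hρ1 : ρ < 1 := max_lt (hlt _ (hε0.trans_le hθ₀.1) hθ₀.2) (by norm_num)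
  have hρ0 : 0 < ρ := lt_max_of_lt_right (by norm_num)
  have hlog : 0 < -Real.log ρ := neg_pos.mpr (Real.log_neg hρ0 hρ1)
  refine ⟨min (s / 4) (-Real.log ρ / Real.pi ^ 2), lt_min (by positivity) (by positivity),
    (min_le_left _ _).trans (by linarith), fun θ hθ => ?_⟩
  rcases lt_or_ge |θ| ε with h | h
  · obtain ⟨h1, h2⟩ := hε θ h
    have hsplit : |θ| ^ (2 + δ) = θ ^ 2 * |θ| ^ δ := by
      rw [Real.rpow_add_of_nonneg (abs_nonneg _) (by norm_num) hδ.le]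
      norm_cast
      rw [sq_abs]
    have h3 : ‖ψ θ‖ ≤ ‖ψ θ - (1 - s * θ ^ 2 / 2 : ℝ)‖ + ‖((1 - s * θ ^ 2 / 2 : ℝ) : ℂ)‖ := by
      refine (norm_add_le _ _).trans' ?_
      rw [sub_add_cancel]
    rw [Complex.norm_real, Real.norm_of_nonneg (by linarith)] at h3
    have h4 := hexp θ
    rw [hsplit] at h4
    have h5 : θ ^ 2 * (C * |θ| ^ δ) ≤ θ ^ 2 * (s / 4) := by gcongr
    have h6 : -(s / 4) * θ ^ 2 ≤ -min (s / 4) (-Real.log ρ / Real.pi ^ 2) * θ ^ 2 := by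
      gcongr
      exact min_le_left _ _
    have h7 := Real.add_one_le_exp (-(s / 4) * θ ^ 2)
    have h8 := Real.exp_le_exp.mpr h6
    linarith
  · have h1 : ‖ψ θ‖ ≤ ρ := (hmax ⟨h, hθ⟩ : ‖ψ θ‖ ≤ ‖ψ θ₀‖).trans (le_max_left _ _)
    refine h1.trans ?_
    rw [← Real.exp_log hρ0, Real.exp_le_exp, Real.exp_log hρ0]
    have h2 : θ ^ 2 ≤ Real.pi ^ 2 := sq_le_sq' (abs_le.mp hθ).1 (abs_le.mp hθ).2
    have h3 : min (s / 4) (-Real.log ρ / Real.pi ^ 2) * θ ^ 2 ≤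
        -Real.log ρ / Real.pi ^ 2 * Real.pi ^ 2 := by
      gcongr
      exact min_le_right _ _
    rw [div_mul_cancel₀ _ (by positivity)] at h3
    linarith

theorem abs_exp_neg_sub_le {y : ℝ} (hy : 0 ≤ y) : |Real.exp (-y) - (1 - y)| ≤ y ^ 2 := by
  have h1 := Real.add_one_le_exp (-y)
  rw [abs_of_nonneg (by linarith)]
  rcases le_total y 1 with h | h
  · have := Real.norm_exp_sub_one_sub_id_le (x := -y) (by rw [norm_neg, Real.norm_of_nonneg hy]; exact h)
    rw [Real.norm_eq_abs, Real.norm_eq_abs, sq_abs] at this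
    have := (le_abs_self _).trans this
    linarith
  · have := Real.exp_le_one_iff.mpr (show -y ≤ 0 by linarith)
    nlinarith

theorem exists_norm_integral_pow_sub_le {ψ : ℝ → ℂ} (hψ : Continuous ψ) {s C δ : ℝ} (hs : 0 < s)
    (hδ0 : 0 < δ) (hδ1 : δ ≤ 1)
    (hexp : ∀ θ, ‖ψ θ - (1 - s * θ ^ 2 / 2 : ℝ)‖ ≤ C * |θ| ^ (2 + δ))
    (hlt : ∀ θ, 0 < |θ| → |θ| ≤ Real.pi → ‖ψ θ‖ < 1) :
    ∃ K, ∀ n : ℕ, 1 ≤ n →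
      ‖(∫ θ in (-Real.pi)..Real.pi, ψ θ ^ n * Complex.exp (Complex.I * θ)) -
        (√(Real.pi / (n * s / 2)) : ℝ)‖ ≤ K * (n : ℝ) ^ (-(1 / 2) - δ / 2) := by
  obtain ⟨c, hc0, hcs, hc⟩ := exists_norm_le_exp_neg_mul_sq hψ hs hδ0 hexp hlt
  have hpi := Real.pi_gt_three
  have hC : 0 ≤ C := by
    have := (norm_nonneg _).trans (hexp 1)
    simpa using this
  set g : ℝ → ℝ := fun θ => Real.exp (-(s / 2) * θ ^ 2) with hg
  set C₂ := C + s ^ 2 / 4 * Real.pi ^ 2 with hC₂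
  have hψg : ∀ θ, |θ| ≤ Real.pi → ‖ψ θ - g θ‖ ≤ C₂ * |θ| ^ (2 + δ) := by
    intro θ hθ
    have h1 : ‖ψ θ - g θ‖ ≤ ‖ψ θ - (1 - s * θ ^ 2 / 2 : ℝ)‖ +
        ‖((1 - s * θ ^ 2 / 2 : ℝ) : ℂ) - g θ‖ := norm_sub_le_norm_sub_add_norm_sub _ _ _
    have h2 : ‖((1 - s * θ ^ 2 / 2 : ℝ) : ℂ) - g θ‖ ≤ (s * θ ^ 2 / 2) ^ 2 := by
      rw [← Complex.ofReal_sub, Complex.norm_real, Real.norm_eq_abs, abs_sub_comm]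
      have := abs_exp_neg_sub_le (y := s * θ ^ 2 / 2) (by positivity)
      convert this using 4
      ring
    have h3 : θ ^ 4 ≤ Real.pi ^ 2 * |θ| ^ (2 + δ) := by
      have e : θ ^ 4 = |θ| ^ (2 - δ) * |θ| ^ (2 + δ) := by
        rw [← Real.rpow_add_of_nonneg (abs_nonneg _) (by linarith) (by linarith)]
        ring_nf
        norm_cast
        rw [show |θ| ^ 4 = (|θ| ^ 2) ^ 2 by ring, sq_abs]
        ring
      rw [e]
      gcongr
      calc |θ| ^ (2 - δ) ≤ Real.pi ^ (2 - δ) := Real.rpow_le_rpow (abs_nonneg _) hθ (by linarith)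
        _ ≤ Real.pi ^ (2 : ℝ) := Real.rpow_le_rpow_of_exponent_le (by linarith) (by linarith)
        _ = Real.pi ^ 2 := by norm_cast
    have h4 := hexp θ
    have h5 : (s * θ ^ 2 / 2) ^ 2 = s ^ 2 / 4 * θ ^ 4 := by ring
    have h6 : s ^ 2 / 4 * θ ^ 4 ≤ s ^ 2 / 4 * (Real.pi ^ 2 * |θ| ^ (2 + δ)) := by gcongr
    rw [hC₂]
    linarith
  set M := 1 + 8 / c ^ 2 with hM
  have hM0 : 0 ≤ M := by positivity
  have hC₂0 : 0 ≤ C₂ := by positivity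
  set K := M + C₂ * Real.exp (c * Real.pi ^ 2) * M with hK
  refine ⟨K * √(Real.pi / (c / 2)), fun n hn => ?_⟩
  have hn1 : (1 : ℝ) ≤ n := by exact_mod_cast hn
  have hn0 : (0 : ℝ) < n := by linarith
  have hgn : ∀ θ, g θ ^ n = Real.exp (-(n * s / 2) * θ ^ 2) := by
    intro θ
    rw [hg, ← Real.exp_nat_mul]
    ring_nf
  have hhalf : (n : ℝ) ^ (-(1:ℝ) / 2) ≤ (n : ℝ) ^ (-δ / 2) :=
    Real.rpow_le_rpow_of_exponent_le hn1 (by linarith)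
  have hB1 : ∀ θ : ℝ, |θ| * Real.exp (-(c * n) * θ ^ 2) ≤
      M * (n : ℝ) ^ (-δ / 2) * Real.exp (-(c * n / 2) * θ ^ 2) := by
    intro θ
    have := abs_rpow_mul_exp_neg_le hc0 (r := 1) (by norm_num) (by norm_num) hn0 θ
    rw [Real.rpow_one] at this
    refine this.trans ?_
    gcongr
  let F : ℝ → ℂ := (Set.Ioc (-Real.pi) Real.pi).indicator
    fun θ => ψ θ ^ n * Complex.exp (Complex.I * θ)
  have hpt : ∀ θ, ‖F θ - (g θ ^ n : ℝ)‖ ≤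
      K * (n : ℝ) ^ (-δ / 2) * Real.exp (-(c * n / 2) * θ ^ 2) := by
    intro θ
    by_cases hθ : θ ∈ Set.Ioc (-Real.pi) Real.pi
    · have habs : |θ| ≤ Real.pi := abs_le.mpr ⟨hθ.1.le, hθ.2⟩
      have hF : F θ = ψ θ ^ n * Complex.exp (Complex.I * θ) := Set.indicator_of_mem hθ _
      have h1 : F θ - (g θ ^ n : ℝ) =
          ψ θ ^ n * (Complex.exp (Complex.I * θ) - 1) + (ψ θ ^ n - (g θ : ℂ) ^ n) := by
        rw [hF]; push_cast; ring
      have hpow : ∀ k : ℕ, Real.exp (-c * θ ^ 2) ^ k = Real.exp (-(c * k) * θ ^ 2) := by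
        intro k
        rw [← Real.exp_nat_mul]
        ring_nf
      have h2 : ‖ψ θ ^ n * (Complex.exp (Complex.I * θ) - 1)‖ ≤
          |θ| * Real.exp (-(c * n) * θ ^ 2) := by
        rw [norm_mul, norm_pow, mul_comm, ← hpow]
        gcongr
        · exact Real.norm_exp_I_mul_ofReal_sub_one_le
        · exact hc θ habs
      have hgc : ‖(g θ : ℂ)‖ ≤ Real.exp (-c * θ ^ 2) := by
        rw [Complex.norm_real, Real.norm_of_nonneg (Real.exp_pos _).le]
        apply Real.exp_le_exp.mpr
        gcongr
      have h3 : ‖ψ θ ^ n - (g θ : ℂ) ^ n‖ ≤ n * (C₂ * |θ| ^ (2 + δ)) *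
          (Real.exp (c * Real.pi ^ 2) * Real.exp (-(c * n) * θ ^ 2)) := by
        obtain ⟨m, rfl⟩ := Nat.exists_eq_add_of_le' hn
        refine (norm_pow_succ_sub_pow_succ_le (hc θ habs) hgc m).trans ?_
        push_cast
        gcongr
        · exact hψg θ habs
        · rw [hpow, ← Real.exp_add]
          apply Real.exp_le_exp.mpr
          have : c * θ ^ 2 ≤ c * Real.pi ^ 2 := by
            refine mul_le_mul_of_nonneg_left ?_ hc0.le
            exact sq_le_sq' (abs_le.mp habs).1 (abs_le.mp habs).2
          linarith
      have h4 := abs_rpow_mul_exp_neg_le hc0 (r := 2 + δ) (by linarith) (by linarith) hn0 θ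
      have h5 : (n : ℝ) * (n : ℝ) ^ (-(2 + δ) / 2) = (n : ℝ) ^ (-δ / 2) := by
        nth_rw 1 [← Real.rpow_one (n : ℝ)]
        rw [← Real.rpow_add hn0]
        ring_nf
      have h6 : n * (C₂ * |θ| ^ (2 + δ)) *
          (Real.exp (c * Real.pi ^ 2) * Real.exp (-(c * n) * θ ^ 2)) ≤
          C₂ * Real.exp (c * Real.pi ^ 2) * M * (n : ℝ) ^ (-δ / 2) *
            Real.exp (-(c * n / 2) * θ ^ 2) := by
        calc _ = n * C₂ * Real.exp (c * Real.pi ^ 2) *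
              (|θ| ^ (2 + δ) * Real.exp (-(c * n) * θ ^ 2)) := by ring
          _ ≤ n * C₂ * Real.exp (c * Real.pi ^ 2) *
              (M * (n : ℝ) ^ (-(2 + δ) / 2) * Real.exp (-(c * n / 2) * θ ^ 2)) := by gcongr
          _ = _ := by rw [← h5]; ring
      rw [h1]
      refine (norm_add_le _ _).trans ((add_le_add (h2.trans (hB1 θ)) (h3.trans h6)).trans_eq ?_)
      rw [hK]
      ring
    · have hF : F θ = 0 := Set.indicator_of_notMem hθ _
      have habs : 1 ≤ |θ| := by
        by_contra! h
        rw [abs_lt] at h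
        exact hθ ⟨by linarith, by linarith⟩
      rw [hF, zero_sub, norm_neg, Complex.norm_real, hgn, Real.norm_of_nonneg (Real.exp_pos _).le]
      calc Real.exp (-(n * s / 2) * θ ^ 2) ≤ 1 * Real.exp (-(c * n) * θ ^ 2) := by
            rw [one_mul]
            apply Real.exp_le_exp.mpr
            gcongr
            nlinarith
        _ ≤ |θ| * Real.exp (-(c * n) * θ ^ 2) := by gcongr
        _ ≤ _ := hB1 θ
        _ ≤ _ := by
          gcongr
          rw [hK]
          exact le_add_of_nonneg_right (by positivity)
  have hFint : MeasureTheory.Integrable F := by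
    refine MeasureTheory.IntegrableOn.integrable_indicator ?_ measurableSet_Ioc
    refine (Continuous.integrableOn_Icc ?_).mono_set Set.Ioc_subset_Icc_self
    fun_prop
  have hgint : MeasureTheory.Integrable fun θ => g θ ^ n := by
    simp_rw [hgn]
    exact integrable_exp_neg_mul_sq (by positivity)
  have hI : (∫ θ in (-Real.pi)..Real.pi, ψ θ ^ n * Complex.exp (Complex.I * θ)) -
      (√(Real.pi / (n * s / 2)) : ℝ) = ∫ θ, F θ - (g θ ^ n : ℝ) := by
    rw [MeasureTheory.integral_sub (g := fun θ => ((g θ ^ n : ℝ) : ℂ)) hFint hgint.ofReal,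
      integral_complex_ofReal]
    simp_rw [hgn]
    rw [integral_gaussian, MeasureTheory.integral_indicator measurableSet_Ioc,
      intervalIntegral.integral_of_le (by linarith)]
  rw [hI]
  refine (MeasureTheory.norm_integral_le_of_norm_le
    ((integrable_exp_neg_mul_sq (b := c * n / 2) (by positivity)).const_mul _)
    (Eventually.of_forall hpt)).trans_eq ?_
  rw [MeasureTheory.integral_const_mul, integral_gaussian,
    show Real.pi / (c * n / 2) = (n : ℝ)⁻¹ * (Real.pi / (c / 2)) by field_simp,
    Real.sqrt_mul (by positivity), Real.sqrt_inv, Real.sqrt_eq_rpow (n : ℝ), ← Real.rpow_neg hn0.le,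
    sub_eq_add_neg, Real.rpow_add hn0]
  ring_nf

theorem norm_exp_sub_quadratic_le (x : ℝ) {δ : ℝ} (hδ0 : 0 < δ) (hδ1 : δ ≤ 1) :
    ‖Complex.exp (Complex.I * x) - 1 - Complex.I * x + (x : ℂ) ^ 2 / 2‖ ≤ 4 * |x| ^ (2 + δ) := by
  have hIx : ‖Complex.I * (x : ℂ)‖ = |x| := by simp
  rcases le_total |x| 1 with h | h
  · have h1 := Complex.norm_exp_sub_sum_le_norm_mul_exp (Complex.I * x) 3
    have e : Complex.exp (Complex.I * x) - ∑ m ∈ Finset.range 3, (Complex.I * x) ^ m /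
        (m.factorial : ℂ) =
        Complex.exp (Complex.I * x) - 1 - Complex.I * x + (x : ℂ) ^ 2 / 2 := by
      simp only [Finset.sum_range_succ, Finset.sum_range_zero, Nat.factorial]
      push_cast
      linear_combination -((x : ℂ) ^ 2 / 2) * Complex.I_sq
    rw [e, hIx] at h1
    have h2 : |x| ^ 3 ≤ |x| ^ (2 + δ) := by
      rw [← Real.rpow_natCast]
      rcases (abs_nonneg x).eq_or_lt with h0 | h0
      · rw [← h0, Real.zero_rpow (by norm_num), Real.zero_rpow (by linarith)]
      · exact Real.rpow_le_rpow_of_exponent_ge h0 h (by push_cast; linarith)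
    have h3 : Real.exp |x| ≤ 4 := by
      have := Real.exp_le_exp.mpr h
      have := Real.exp_one_lt_d9
      linarith
    calc _ ≤ |x| ^ 3 * Real.exp |x| := h1
      _ ≤ |x| ^ (2 + δ) * 4 := by gcongr
      _ = _ := by ring
  · have h1 : (1 : ℝ) ≤ |x| ^ (2 + δ) := Real.one_le_rpow h (by linarith)
    have h2 : |x| ≤ |x| ^ (2 + δ) := by
      simpa using Real.rpow_le_rpow_of_exponent_le h (show (1 : ℝ) ≤ 2 + δ by linarith)
    have h3 : |x| ^ 2 ≤ |x| ^ (2 + δ) := by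
      simpa using Real.rpow_le_rpow_of_exponent_le h (show (2 : ℝ) ≤ 2 + δ by linarith)
    have h4 : ‖Complex.exp (Complex.I * x)‖ = 1 := by
      rw [mul_comm, Complex.norm_exp_ofReal_mul_I]
    calc _ ≤ ‖Complex.exp (Complex.I * x)‖ + ‖(1 : ℂ)‖ + ‖Complex.I * (x : ℂ)‖ +
          ‖(x : ℂ) ^ 2 / 2‖ :=
          norm_add_le_of_le (norm_sub_le_of_le (norm_sub_le _ _) le_rfl) le_rfl
      _ = 1 + 1 + |x| + |x| ^ 2 / 2 := by
          rw [h4, hIx, norm_one, norm_div, norm_pow, Complex.norm_real, Real.norm_eq_abs]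
          simp
      _ ≤ _ := by linarith

theorem summable_pow_mul_of_summable_rpow_mul {p : ℕ → ℝ} (hp : ∀ k, 0 ≤ p k) {δ : ℝ} (hδ0 : 0 < δ)
    (hmom : Summable fun k : ℕ => (k : ℝ) ^ (2 + δ) * p k) {j : ℕ} (hj : j ≤ 2) :
    Summable fun k : ℕ => (k : ℝ) ^ j * p k := by
  rw [← summable_nat_add_iff 1] at hmom ⊢
  refine Summable.of_nonneg_of_le (fun k => mul_nonneg (by positivity) (hp _)) (fun k => ?_) hmom
  refine mul_le_mul_of_nonneg_right ?_ (hp _)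
  rw [← Real.rpow_natCast]
  have : (j : ℝ) ≤ 2 := by exact_mod_cast hj
  exact Real.rpow_le_rpow_of_exponent_le (by push_cast; linarith [Nat.cast_nonneg (α := ℝ) k])
    (by linarith)

/-- The characteristic function of a step `X - 1`, where `X` has law `p`. -/
noncomputable def stepCharFun (p : ℕ → ℝ) (θ : ℝ) : ℂ :=
  ∑' k : ℕ, (p k : ℂ) * Complex.exp (Complex.I * (((k : ℝ) - 1) * θ : ℝ))

theorem norm_mul_exp_I {r : ℝ} (hr : 0 ≤ r) (x : ℝ) :
    ‖(r : ℂ) * Complex.exp (Complex.I * x)‖ = r := by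
  rw [norm_mul, mul_comm Complex.I, Complex.norm_exp_ofReal_mul_I, mul_one, Complex.norm_real,
    Real.norm_of_nonneg hr]

theorem continuous_stepCharFun {p : ℕ → ℝ} (hp : ∀ k, 0 ≤ p k) (hs : Summable p) :
    Continuous (stepCharFun p) :=
  continuous_tsum (fun k => by fun_prop) hs fun k θ => (norm_mul_exp_I (hp k) _).le

theorem norm_stepCharFun_sub_le {p : ℕ → ℝ} (hp : ∀ k, 0 ≤ p k) (hpsum : ∑' k, p k = 1)
    (hcrit : ∑' k : ℕ, (k : ℝ) * p k = 1) {δ : ℝ} (hδ0 : 0 < δ) (hδ1 : δ ≤ 1)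
    (hmom : Summable fun k : ℕ => (k : ℝ) ^ (2 + δ) * p k) (θ : ℝ) :
    ‖stepCharFun p θ - (1 - (∑' k : ℕ, (k : ℝ) * ((k : ℝ) - 1) * p k) * θ ^ 2 / 2 : ℝ)‖ ≤
      4 * (∑' k : ℕ, (p k + (k : ℝ) ^ (2 + δ) * p k)) * |θ| ^ (2 + δ) := by
  have s0 : Summable p := by
    simpa using summable_pow_mul_of_summable_rpow_mul hp hδ0 hmom (j := 0) (by norm_num)
  have s1 : Summable fun k : ℕ => (k : ℝ) * p k := by
    simpa using summable_pow_mul_of_summable_rpow_mul hp hδ0 hmom (j := 1) (by norm_num)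
  have s2 := summable_pow_mul_of_summable_rpow_mul hp hδ0 hmom (j := 2) le_rfl
  set s := ∑' k : ℕ, (k : ℝ) * ((k : ℝ) - 1) * p k with hs
  have H0 : HasSum p 1 := hpsum ▸ s0.hasSum
  have H1 : HasSum (fun k : ℕ => (k : ℝ) * p k) 1 := hcrit ▸ s1.hasSum
  have H2 : HasSum (fun k : ℕ => (k : ℝ) * ((k : ℝ) - 1) * p k) s := by
    refine Summable.hasSum ?_
    refine (s2.sub s1).congr fun k => ?_
    ring
  have H1' : HasSum (fun k : ℕ => ((k : ℝ) - 1) * p k) 0 := by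
    simpa [sub_mul] using H1.sub H0
  have H2' : HasSum (fun k : ℕ => ((k : ℝ) - 1) ^ 2 * p k) s := by
    have := H2.sub H1'
    rw [sub_zero] at this
    exact this.congr_fun fun k => by ring
  have Hψ : HasSum (fun k : ℕ => (p k : ℂ) * Complex.exp (Complex.I * (((k : ℝ) - 1) * θ : ℝ)))
      (stepCharFun p θ) := by
    refine Summable.hasSum ?_
    refine Summable.of_norm_bounded s0 fun k => (norm_mul_exp_I (hp k) _).le
  have K0 : HasSum (fun k => (p k : ℂ)) ((1 : ℝ) : ℂ) := Complex.hasSum_ofReal.mpr H0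
  have K1 := (Complex.hasSum_ofReal.mpr H1').mul_left (Complex.I * θ)
  have K2 := (Complex.hasSum_ofReal.mpr H2').mul_left ((θ : ℂ) ^ 2 / 2)
  have K := ((Hψ.sub K0).sub K1).add K2
  have e : stepCharFun p θ - (1 - s * θ ^ 2 / 2 : ℝ) = ∑' k : ℕ, (p k : ℂ) *
      (Complex.exp (Complex.I * (((k : ℝ) - 1) * θ : ℝ)) - 1 -
        Complex.I * (((k : ℝ) - 1) * θ : ℝ) + ((((k : ℝ) - 1) * θ : ℝ) : ℂ) ^ 2 / 2) := by
    have := K.tsum_eq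
    trans (stepCharFun p θ - ((1 : ℝ) : ℂ) - Complex.I * θ * ((0 : ℝ) : ℂ) + (θ : ℂ) ^ 2 / 2 * (s : ℂ))
    · push_cast
      ring
    · rw [← this]
      refine tsum_congr fun k => ?_
      push_cast
      ring
  rw [e]
  have sb : Summable fun k : ℕ => p k + (k : ℝ) ^ (2 + δ) * p k := s0.add hmom
  refine tsum_of_norm_bounded ((sb.hasSum.mul_left 4).mul_right (|θ| ^ (2 + δ))) fun k => ?_
  rw [norm_mul, Complex.norm_real, Real.norm_of_nonneg (hp k)]
  have hk : |(k : ℝ) - 1| ^ (2 + δ) ≤ 1 + (k : ℝ) ^ (2 + δ) := by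
    cases k with
    | zero =>
      have : (0:ℝ) ≤ (0:ℝ) ^ (2 + δ) := by positivity
      simpa using this
    | succ k =>
      have : |((k + 1 : ℕ) : ℝ) - 1| ≤ ((k + 1 : ℕ) : ℝ) := by
        push_cast
        rw [add_sub_cancel_right, abs_of_nonneg (by positivity)]
        linarith
      have := Real.rpow_le_rpow (abs_nonneg _) this (show 0 ≤ 2 + δ by linarith)
      linarith
  calc _ ≤ p k * (4 * |((k : ℝ) - 1) * θ| ^ (2 + δ)) :=
        mul_le_mul_of_nonneg_left (norm_exp_sub_quadratic_le _ hδ0 hδ1) (hp k)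
    _ = p k * (4 * (|(k : ℝ) - 1| ^ (2 + δ) * |θ| ^ (2 + δ))) := by
        rw [abs_mul, Real.mul_rpow (abs_nonneg _) (abs_nonneg _)]
    _ ≤ p k * (4 * ((1 + (k : ℝ) ^ (2 + δ)) * |θ| ^ (2 + δ))) := by
        have := hp k
        gcongr
    _ = _ := by ring

theorem norm_stepCharFun_lt_one {p : ℕ → ℝ} (hp : ∀ k, 0 ≤ p k) (hpsum : ∑' k, p k = 1)
    (hs : Summable p) (hp0 : p 0 ≠ 0) (hspan : ∀ d : ℕ, (∀ k, p k ≠ 0 → d ∣ k) → d = 1) (θ : ℝ)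
    (hθ0 : 0 < |θ|) (hθ : |θ| ≤ Real.pi) : ‖stepCharFun p θ‖ < 1 := by
  have hH : HasSum p 1 := hpsum ▸ hs.hasSum
  have hle : ‖stepCharFun p θ‖ ≤ 1 := tsum_of_norm_bounded hH fun k => (norm_mul_exp_I (hp k) _).le
  refine hle.lt_of_ne fun heq => ?_
  set φ := stepCharFun p θ with hφ
  set w : ℕ → ℂ := fun k => starRingEnd ℂ φ * Complex.exp (Complex.I * (((k : ℝ) - 1) * θ : ℝ))
    with hw
  have hwn : ∀ k, ‖w k‖ = 1 := by
    intro k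
    rw [hw]
    simp only
    rw [norm_mul, RCLike.norm_conj, heq, mul_comm Complex.I, Complex.norm_exp_ofReal_mul_I, one_mul]
  have Hψ : HasSum (fun k : ℕ => (p k : ℂ) * Complex.exp (Complex.I * (((k : ℝ) - 1) * θ : ℝ))) φ :=
    (Summable.of_norm_bounded hs fun k => (norm_mul_exp_I (hp k) _).le).hasSum
  have Hw : HasSum (fun k => p k * (1 - (w k).re)) 0 := by
    have h1 := Complex.hasSum_re (Hψ.mul_left (starRingEnd ℂ φ))
    rw [mul_comm, Complex.mul_conj, Complex.normSq_eq_norm_sq, heq] at h1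
    have h2 := hH.sub h1
    simp only [one_pow, Complex.ofReal_re, sub_self] at h2
    refine h2.congr_fun fun k => ?_
    rw [hw]
    simp only
    rw [mul_left_comm, Complex.re_ofReal_mul]
    ring
  have hnn : ∀ k, 0 ≤ p k * (1 - (w k).re) := fun k =>
    mul_nonneg (hp k) (sub_nonneg.mpr ((Complex.re_le_norm _).trans (hwn k).le))
  have hz := (hasSum_zero_iff_of_nonneg hnn).mp Hw
  have hw1 : ∀ k, p k ≠ 0 → w k = 1 := by
    intro k hk
    have h1 : (w k).re = 1 := by
      have := (mul_eq_zero.mp (congrFun hz k)).resolve_left hk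
      linarith
    have h2 := Complex.sq_norm (w k)
    rw [hwn, Complex.normSq_apply, h1] at h2
    have h3 : (w k).im = 0 := by nlinarith
    exact Complex.ext (by simpa using h1) (by simpa using h3)
  set u := Complex.exp (Complex.I * θ) with hu
  have hwk : ∀ k, w k = w 0 * u ^ k := by
    intro k
    rw [hw, hu]
    simp only
    rw [← Complex.exp_nat_mul, mul_assoc, ← Complex.exp_add]
    congr 2
    push_cast
    ring
  have hord : orderOf u = 1 := by
    refine hspan _ fun k hk => orderOf_dvd_iff_pow_eq_one.mpr ?_
    have := hw1 k hk
    rwa [hwk, hw1 0 hp0, one_mul] at this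
  have hu1 := orderOf_eq_one_iff.mp hord
  rw [hu, Complex.exp_eq_one_iff] at hu1
  obtain ⟨n, hn⟩ := hu1
  have hn' : θ = n * (2 * Real.pi) := by
    have : Complex.I * (θ : ℂ) = Complex.I * ((n * (2 * Real.pi) : ℝ) : ℂ) := by
      rw [hn]; push_cast; ring
    exact_mod_cast mul_left_cancel₀ Complex.I_ne_zero this
  have hn0 : n ≠ 0 := by
    rintro rfl
    simp [hn'] at hθ0
  have h1 : (1 : ℝ) ≤ |(n : ℝ)| := by exact_mod_cast Int.one_le_abs hn0
  rw [hn', abs_mul, abs_of_pos (show 0 < 2 * Real.pi by positivity)] at hθ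
  nlinarith [Real.pi_pos]

theorem zero_ne_of_critical {p : ℕ → ℝ} (hp : ∀ k, 0 ≤ p k) (hpsum : ∑' k, p k = 1)
    (hcrit : ∑' k : ℕ, (k : ℝ) * p k = 1) (s0 : Summable p)
    (s1 : Summable fun k : ℕ => (k : ℝ) * p k)
    (hσpos : 0 < ∑' k : ℕ, (k : ℝ) * ((k : ℝ) - 1) * p k) : p 0 ≠ 0 := by
  intro h0
  have H : HasSum (fun k : ℕ => ((k : ℝ) - 1) * p k) 0 := by
    have := s1.hasSum.sub s0.hasSum
    rw [hpsum, hcrit, sub_self] at this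
    exact this.congr_fun fun k => by ring
  have hnn : ∀ k : ℕ, 0 ≤ ((k : ℝ) - 1) * p k := by
    intro k
    cases k with
    | zero => simp [h0]
    | succ k =>
      push_cast
      rw [add_sub_cancel_right]
      exact mul_nonneg (Nat.cast_nonneg k) (hp _)
  have hz := (hasSum_zero_iff_of_nonneg hnn).mp H
  have : ∑' k : ℕ, (k : ℝ) * ((k : ℝ) - 1) * p k = 0 := by
    rw [← tsum_zero (α := ℝ) (β := ℕ)]
    refine tsum_congr fun k => ?_
    have h1 : ((k : ℝ) - 1) * p k = 0 := congrFun hz k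
    rw [mul_assoc, h1, mul_zero]
  exact hσpos.ne' this

/-- The functional equation on `[0, 1]`, read off coefficientwise. -/
theorem coeff_succ_eq_sum_of_functional_eq {p q : ℕ → ℝ} (hp : ∀ k, 0 ≤ p k) (hps : Summable p)
    (hq0 : q 0 = 0) (hqnn : ∀ n, 0 ≤ q n) (hqsum : ∑' n, q n = 1)
    (hfix : ∀ z ∈ Set.Icc (0:ℝ) 1,
      (∑' n, q n * z ^ n) = z * ∑' k, p k * (∑' n, q n * z ^ n) ^ k) (n : ℕ) :
    q (n + 1) = ∑ k ∈ Finset.range (n + 1),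
      p k * PowerSeries.coeff n (PowerSeries.mk q ^ k) := by
  set Q := PowerSeries.mk q with hQ
  have hqs : Summable q := by
    by_contra h
    rw [tsum_eq_zero_of_not_summable h] at hqsum
    exact zero_ne_one hqsum
  have hQs : Summable fun n => ‖PowerSeries.coeff n Q‖ := by
    simpa [hQ] using hqs.abs
  have hcnn : ∀ k n, 0 ≤ PowerSeries.coeff n (Q ^ k) := by
    intro k
    induction k with
    | zero =>
      intro n
      rw [pow_zero, PowerSeries.coeff_one]
      split_ifs <;> norm_num
    | succ k ih =>
      intro n
      rw [pow_succ, PowerSeries.coeff_mul]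
      refine Finset.sum_nonneg fun x _ => mul_nonneg (ih _) ?_
      rw [hQ, PowerSeries.coeff_mk]
      exact hqnn _
  have hsum : ∀ z ∈ Set.Icc (0:ℝ) 1, Summable (Function.uncurry fun k n =>
      p k * PowerSeries.coeff n (Q ^ k) * z ^ n) ∧
      ∀ k, ∑' n, p k * PowerSeries.coeff n (Q ^ k) * z ^ n = p k * (∑' n, q n * z ^ n) ^ k := by
    intro z hz
    have hz' : ‖z‖ ≤ 1 := by rw [Real.norm_of_nonneg hz.1]; exact hz.2
    have hk : ∀ k, ∑' n, p k * PowerSeries.coeff n (Q ^ k) * z ^ n =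
        p k * (∑' n, q n * z ^ n) ^ k := by
      intro k
      simp_rw [mul_assoc]
      rw [tsum_mul_left, PowerSeries.tsum_coeff_pow_mul hQs hz' k]
      simp [hQ]
    refine ⟨?_, hk⟩
    have hnn : 0 ≤ Function.uncurry fun k n => p k * PowerSeries.coeff n (Q ^ k) * z ^ n :=
      fun x => mul_nonneg (mul_nonneg (hp _) (hcnn _ _)) (pow_nonneg hz.1 _)
    rw [summable_prod_of_nonneg hnn]
    refine ⟨fun k => ?_, ?_⟩
    · refine Summable.of_nonneg_of_le (fun n => hnn (k, n)) (fun n => ?_)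
        ((PowerSeries.summable_norm_coeff_pow hQs k).mul_left (p k))
      simp only [Function.uncurry]
      rw [Real.norm_of_nonneg (hcnn k n)]
      exact mul_le_of_le_one_right (mul_nonneg (hp _) (hcnn _ _)) (pow_le_one₀ hz.1 hz.2)
    · simp only [Function.uncurry]
      simp_rw [hk]
      have hy0 : 0 ≤ ∑' n, q n * z ^ n :=
        tsum_nonneg fun n => mul_nonneg (hqnn n) (pow_nonneg hz.1 n)
      have hqz : ∀ n, q n * z ^ n ≤ q n := fun n =>
        mul_le_of_le_one_right (hqnn n) (pow_le_one₀ hz.1 hz.2)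
      have hy1 : ∑' n, q n * z ^ n ≤ 1 := by
        rw [← hqsum]
        exact Summable.tsum_le_tsum hqz (Summable.of_nonneg_of_le
          (fun n => mul_nonneg (hqnn n) (pow_nonneg hz.1 n)) hqz hqs) hqs
      exact Summable.of_nonneg_of_le (fun k => mul_nonneg (hp k) (pow_nonneg hy0 k))
        (fun k => mul_le_of_le_one_right (hp k) (pow_le_one₀ hy0 hy1)) hps
  set b : ℕ → ℝ := fun n => ∑ k ∈ Finset.range (n + 1), p k * PowerSeries.coeff n (Q ^ k) with hb
  have hbt : ∀ n, ∀ x : ℝ, ∑' k, p k * PowerSeries.coeff n (Q ^ k) * x = b n * x := by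
    intro n x
    rw [tsum_mul_right, tsum_eq_sum (s := Finset.range (n + 1))]
    intro k hk
    rw [PowerSeries.coeff_pow_of_lt (by simpa [hQ] using hq0) (by simpa using hk), mul_zero]
  have hbsum : Summable b := by
    have h1 := (hsum 1 ⟨zero_le_one, le_rfl⟩).1.prod_symm.prod
    refine h1.congr fun n => ?_
    simpa [Function.uncurry] using hbt n 1
  have hbz : ∀ z ∈ Set.Icc (0:ℝ) 1, ∑' n, b n * z ^ n = ∑' k, p k * (∑' n, q n * z ^ n) ^ k := by
    intro z hz
    obtain ⟨h1, h2⟩ := hsum z hz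
    simp_rw [← h2, ← hbt]
    exact h1.tsum_comm
  let c : ℕ → ℝ := fun n => Nat.casesOn n 0 b
  have hcs : Summable c := (summable_nat_add_iff 1).mp hbsum
  have hbnn : ∀ n, 0 ≤ b n := fun n => Finset.sum_nonneg fun k _ => mul_nonneg (hp _) (hcnn _ _)
  have key : q = c := by
    refine eq_of_tsum_mul_pow_eq hqs.norm hcs.norm fun z hz => ?_
    rw [hfix z hz, ← hbz z hz]
    have hcz : Summable fun n => c n * z ^ n := by
      refine Summable.of_norm_bounded hcs.norm fun n => ?_
      rw [norm_mul, norm_pow, Real.norm_of_nonneg hz.1]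
      exact mul_le_of_le_one_right (norm_nonneg _) (pow_le_one₀ hz.1 hz.2)
    rw [hcz.tsum_eq_zero_add, ← tsum_mul_left]
    have hc0 : c 0 = 0 := rfl
    rw [hc0, zero_mul, zero_add]
    refine tsum_congr fun n => ?_
    have hcn : c (n + 1) = b n := rfl
    rw [hcn]
    ring
  exact congrFun key (n + 1)

/-- Lagrange inversion combined with Fourier inversion for the `n`-step walk. -/
theorem natCast_mul_eq_integral_stepCharFun {p q : ℕ → ℝ} (hps : Summable p)
    (hq0 : q 0 = 0)
    (hrec : ∀ n, q (n + 1) = ∑ k ∈ Finset.range (n + 1),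
      p k * PowerSeries.coeff n (PowerSeries.mk q ^ k)) {n : ℕ} (hn : 1 ≤ n) :
    (2 * Real.pi * (n * q n : ℝ) : ℂ) =
      ∫ θ in (-Real.pi)..Real.pi, stepCharFun p θ ^ n * Complex.exp (Complex.I * θ) := by
  obtain ⟨m, rfl⟩ := Nat.exists_eq_add_of_le' hn
  have hlag := PowerSeries.lagrange_inversion (P := PowerSeries.mk p) (Q := PowerSeries.mk q)
    (by simpa using hq0) (by simpa using hrec) (m + 1) 1
  rw [pow_one, pow_one, PowerSeries.coeff_mk, PowerSeries.coeff_succ_X_mul, Nat.cast_one,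
    one_mul] at hlag
  rw [hlag]
  set P : PowerSeries ℂ := PowerSeries.map Complex.ofRealHom (PowerSeries.mk p) with hP
  have hPs : Summable fun n => ‖PowerSeries.coeff n P‖ := by
    simpa [hP] using hps.abs
  have hcoeff : ((PowerSeries.coeff m (PowerSeries.mk p ^ (m + 1)) : ℝ) : ℂ) =
      PowerSeries.coeff m (P ^ (m + 1)) := by
    rw [hP, ← map_pow, PowerSeries.coeff_map]
    rfl
  rw [hcoeff, ← integral_tsum_exp_mul_exp (PowerSeries.summable_norm_coeff_pow hPs (m + 1)) m]
  refine intervalIntegral.integral_congr fun θ _ => ?_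
  have hu : ‖Complex.exp (Complex.I * θ)‖ ≤ 1 := by
    rw [mul_comm, Complex.norm_exp_ofReal_mul_I]
  have hev : ∑' n, PowerSeries.coeff n P * Complex.exp (Complex.I * θ) ^ n =
      stepCharFun p θ * Complex.exp (Complex.I * θ) := by
    rw [stepCharFun, ← tsum_mul_right]
    refine tsum_congr fun k => ?_
    rw [hP, PowerSeries.coeff_map, PowerSeries.coeff_mk, mul_assoc, ← Complex.exp_nat_mul,
      ← Complex.exp_add]
    congr 2
    push_cast
    ring
  rw [PowerSeries.tsum_coeff_pow_mul hPs hu, hev, mul_pow, mul_assoc, ← Complex.exp_nat_mul,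
    ← Complex.exp_add]
  congr 2
  push_cast
  ring

/-- For a critical offspring distribution of span 1, with variance
`σ² ∈ (0,∞)` and a finite `(2+δ)`-th moment (`0 < δ ≤ 1`), the tree-size probabilities
satisfy `q n = (2πσ²)^(-1/2) n^(-3/2) + O(n^(-3/2-δ/2))` as `n → ∞`. -/
theorem stmt2
    (p : ℕ → ℝ) (hp : ∀ k, 0 ≤ p k)
    (hpsum : ∑' k, p k = 1)
    (hcrit : ∑' k : ℕ, (k : ℝ) * p k = 1)
    (hspan : ∀ d : ℕ, (∀ k, p k ≠ 0 → d ∣ k) → d = 1)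
    (hσpos : 0 < ∑' k : ℕ, (k : ℝ) * ((k : ℝ) - 1) * p k)
    (δ : ℝ) (hδ0 : 0 < δ) (hδ1 : δ ≤ 1)
    (hmom : Summable (fun k : ℕ => (k : ℝ) ^ ((2:ℝ) + δ) * p k))
    (q : ℕ → ℝ) (hq0 : q 0 = 0) (hqnn : ∀ n, 0 ≤ q n)
    (hqsum : ∑' n, q n = 1)
    (hfix : ∀ z ∈ Set.Icc (0:ℝ) 1,
      (∑' n, q n * z ^ n) = z * ∑' k, p k * (∑' n, q n * z ^ n) ^ k) :
    Asymptotics.IsBigO Filter.atTop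
      (fun n : ℕ => q n -
        (2 * Real.pi * ∑' k : ℕ, (k : ℝ) * ((k : ℝ) - 1) * p k) ^ (-(1:ℝ)/2) *
          (n : ℝ) ^ (-(3:ℝ)/2))
      (fun n : ℕ => (n : ℝ) ^ (-(3:ℝ)/2 - δ/2)) := by
  have s0 : Summable p := by
    simpa using summable_pow_mul_of_summable_rpow_mul hp hδ0 hmom (j := 0) (by norm_num)
  have s1 : Summable fun k : ℕ => (k : ℝ) * p k := by
    simpa using summable_pow_mul_of_summable_rpow_mul hp hδ0 hmom (j := 1) (by norm_num)
  have hp0 := zero_ne_of_critical hp hpsum hcrit s0 s1 hσpos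
  have hexp := norm_stepCharFun_sub_le hp hpsum hcrit hδ0 hδ1 hmom
  set s := ∑' k : ℕ, (k : ℝ) * ((k : ℝ) - 1) * p k with hs
  obtain ⟨K, hK⟩ := exists_norm_integral_pow_sub_le (continuous_stepCharFun hp s0) hσpos hδ0 hδ1
    hexp (norm_stepCharFun_lt_one hp hpsum s0 hp0 hspan)
  have hrec := coeff_succ_eq_sum_of_functional_eq hp s0 hq0 hqnn hqsum hfix
  refine IsBigO.of_bound (K / (2 * Real.pi)) ?_
  filter_upwards [eventually_ge_atTop 1] with n hn
  have hn0 : (0 : ℝ) < n := by exact_mod_cast hn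
  have h1 := hK n hn
  rw [← natCast_mul_eq_integral_stepCharFun s0 hq0 hrec hn] at h1
  have h2 : (2 * Real.pi * (n * q n : ℝ) : ℂ) - (√(Real.pi / (n * s / 2)) : ℝ) =
      ((2 * Real.pi * n * (q n - (2 * Real.pi * s) ^ (-(1:ℝ)/2) * (n : ℝ) ^ (-(3:ℝ)/2)) : ℝ) : ℂ)
      := by
    have e : √(Real.pi / (n * s / 2)) =
        2 * Real.pi * n * ((2 * Real.pi * s) ^ (-(1:ℝ)/2) * (n : ℝ) ^ (-(3:ℝ)/2)) := by
      have e1 : Real.pi / (n * s / 2) = (2 * Real.pi) ^ 2 * (2 * Real.pi * s)⁻¹ * (n : ℝ)⁻¹ := by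
        field_simp
      have e2 : (n : ℝ) * (n : ℝ) ^ (-(3:ℝ)/2) = (√(n : ℝ))⁻¹ := by
        rw [Real.sqrt_eq_rpow, ← Real.rpow_neg hn0.le]
        nth_rw 1 [← Real.rpow_one (n : ℝ)]
        rw [← Real.rpow_add hn0]
        norm_num
      have e3 : (2 * Real.pi * s) ^ (-(1:ℝ)/2) = (√(2 * Real.pi * s))⁻¹ := by
        rw [Real.sqrt_eq_rpow, ← Real.rpow_neg (by positivity)]
        norm_num
      rw [e1, Real.sqrt_mul (by positivity), Real.sqrt_mul (by positivity),
        Real.sqrt_sq (by positivity), Real.sqrt_inv, Real.sqrt_inv, e3, ← e2]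
      ring
    rw [e]
    push_cast
    ring
  rw [h2, Complex.norm_real, norm_mul, Real.norm_of_nonneg (show 0 ≤ 2 * Real.pi * (n : ℝ) by
    positivity)] at h1
  have h3 : (n : ℝ) ^ (-(1 / 2) - δ / 2) = n * (n : ℝ) ^ (-(3:ℝ)/2 - δ/2) := by
    nth_rw 2 [← Real.rpow_one (n : ℝ)]
    rw [← Real.rpow_add hn0]
    ring_nf
  rw [h3] at h1
  rw [Real.norm_of_nonneg (show 0 ≤ (n : ℝ) ^ (-(3:ℝ)/2 - δ/2) by positivity),
    ← mul_le_mul_iff_right₀ (show 0 < 2 * Real.pi * (n : ℝ) by positivity)]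
  refine h1.trans_eq ?_
  field_simp
end

section
/- Let (p_k)_{k≥0} be a critical offspring distribution with span 1, variance σ² ∈ (0,∞), and ∑_{k≥0} k^{2+δ} p_k < ∞ for some δ ∈ (0,1]. Then there exist R > 1, θ ∈ (0,π/2), a constant C, and an analytic function Y on the Δ-domain Δ = {z ∈ ℂ : |z| < R, z ≠ 1, |arg(z−1)| > θ} such that Y(z) = ∑_{n≥1} q_n z^n for |z| < 1, and for all z ∈ Δ: |Y(z) − (1 − √2·σ^{-1}(1−z)^{1/2})| ≤ C|1−z|^{(1+δ)/2}, |Y′(z) − 2^{-1/2}σ^{-1}(1−z)^{-1/2}| ≤ C|1−z|^{(δ−1)/2}, and |z·Y′(z)/Y(z) − 2^{-1/2}σ^{-1}(1−z)^{-1/2}| ≤ C|1−z|^{(δ−1)/2}. -/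
/-- A Δ-domain: `{z : |z| < R, z ≠ 1, |arg(z−1)| > θ}`. -/
def deltaDom (R θ : ℝ) : Set ℂ :=
  {z : ℂ | ‖z‖ < R ∧ z ≠ 1 ∧ θ < |Complex.arg (z - 1)|}

/-- The probability generating function of `p`, as a function of a complex variable. -/
noncomputable def pgf (p : ℕ → ℝ) (w : ℂ) : ℂ := ∑' k, (p k : ℂ) * w ^ k

/-- The termwise derivative of `pgf p`. -/
noncomputable def pgfDeriv (p : ℕ → ℝ) (w : ℂ) : ℂ := ∑' k : ℕ, (p k : ℂ) * (k * w ^ (k - 1))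

section PowerBounds

variable {v : ℂ}

lemma norm_one_sub_pow_sub_one_le (hv : ‖1 - v‖ ≤ 1) (k : ℕ) :
    ‖(1 - v) ^ k - 1‖ ≤ k * ‖v‖ := by
  induction k with
  | zero => simp
  | succ k ih =>
    have h : (1 - v) ^ (k + 1) - 1 = ((1 - v) ^ k - 1) * (1 - v) - v := by ring
    rw [h]
    calc _ ≤ ‖(1 - v) ^ k - 1‖ * ‖1 - v‖ + ‖v‖ := by
          rw [← norm_mul]; exact norm_sub_le _ _
      _ ≤ (k * ‖v‖) * 1 + ‖v‖ := by gcongr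
      _ = _ := by push_cast; ring

lemma norm_one_sub_pow_sub_linear_le (hv : ‖1 - v‖ ≤ 1) (k : ℕ) :
    ‖(1 - v) ^ k - 1 + k * v‖ ≤ (k : ℝ) ^ 2 * ‖v‖ ^ 2 := by
  induction k with
  | zero => simp
  | succ k ih =>
    have h : (1 - v) ^ (k + 1) - 1 + ((k + 1 : ℕ) : ℂ) * v
        = ((1 - v) ^ k - 1 + k * v) - v * ((1 - v) ^ k - 1) := by push_cast; ring
    rw [h]
    calc _ ≤ ‖(1 - v) ^ k - 1 + k * v‖ + ‖v‖ * ‖(1 - v) ^ k - 1‖ := by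
          rw [← norm_mul]; exact norm_sub_le _ _
      _ ≤ (k : ℝ) ^ 2 * ‖v‖ ^ 2 + ‖v‖ * (k * ‖v‖) := by
          gcongr; exact norm_one_sub_pow_sub_one_le hv k
      _ ≤ _ := by push_cast; nlinarith [sq_nonneg ‖v‖, mul_nonneg (Nat.cast_nonneg (α := ℝ) k) (sq_nonneg ‖v‖)]

lemma norm_one_sub_pow_sub_quadratic_le (hv : ‖1 - v‖ ≤ 1) (k : ℕ) :
    ‖(1 - v) ^ k - 1 + k * v - (k * (k - 1) / 2 : ℂ) * v ^ 2‖ ≤ (k : ℝ) ^ 3 * ‖v‖ ^ 3 := by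
  induction k with
  | zero => simp
  | succ k ih =>
    have h : (1 - v) ^ (k + 1) - 1 + ((k + 1 : ℕ) : ℂ) * v
          - (((k + 1 : ℕ) : ℂ) * (((k + 1 : ℕ) : ℂ) - 1) / 2 : ℂ) * v ^ 2
        = ((1 - v) ^ k - 1 + k * v - (k * (k - 1) / 2 : ℂ) * v ^ 2)
          - v * ((1 - v) ^ k - 1 + k * v) := by push_cast; ring
    rw [h]
    calc _ ≤ ‖(1 - v) ^ k - 1 + k * v - (k * (k - 1) / 2 : ℂ) * v ^ 2‖
            + ‖v‖ * ‖(1 - v) ^ k - 1 + k * v‖ := by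
          rw [← norm_mul]; exact norm_sub_le _ _
      _ ≤ (k : ℝ) ^ 3 * ‖v‖ ^ 3 + ‖v‖ * ((k : ℝ) ^ 2 * ‖v‖ ^ 2) := by
          gcongr; exact norm_one_sub_pow_sub_linear_le hv k
      _ = ((k : ℝ) ^ 3 + (k : ℝ) ^ 2) * ‖v‖ ^ 3 := by ring
      _ ≤ _ := by
          gcongr
          push_cast
          nlinarith [Nat.cast_nonneg (α := ℝ) k, sq_nonneg (k : ℝ)]

/-- Interpolation between two consecutive natural powers. -/
lemma min_pow_le_rpow {x δ : ℝ} (hx : 0 ≤ x) (hδ0 : 0 < δ) (hδ1 : δ ≤ 1) (n : ℕ) :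
    min (x ^ n) (x ^ (n + 1)) ≤ x ^ ((n : ℝ) + δ) := by
  rcases le_total x 1 with h | h
  · refine (min_le_right _ _).trans ?_
    rw [← Real.rpow_natCast]
    rcases hx.eq_or_lt with rfl | hx
    · rw [Real.zero_rpow (by positivity), Real.zero_rpow (by positivity)]
    · exact Real.rpow_le_rpow_of_exponent_ge hx h (by push_cast; linarith)
  · refine (min_le_left _ _).trans ?_
    rw [← Real.rpow_natCast]
    exact Real.rpow_le_rpow_of_exponent_le h (by linarith)

lemma norm_one_sub_pow_sub_quadratic_le_rpow {δ : ℝ} (hδ0 : 0 < δ) (hδ1 : δ ≤ 1)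
    (hv : ‖1 - v‖ ≤ 1) (k : ℕ) :
    ‖(1 - v) ^ k - 1 + k * v - (k * (k - 1) / 2 : ℂ) * v ^ 2‖
      ≤ 2 * ((k : ℝ) ^ (2 + δ) * ‖v‖ ^ (2 + δ)) := by
  have h3 := norm_one_sub_pow_sub_quadratic_le hv k
  have h2 : ‖(1 - v) ^ k - 1 + k * v - (k * (k - 1) / 2 : ℂ) * v ^ 2‖
      ≤ 2 * ((k : ℝ) ^ 2 * ‖v‖ ^ 2) := by
    have hk : ‖(k * (k - 1) / 2 : ℂ)‖ ≤ (k : ℝ) ^ 2 := by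
      rcases k with _ | k
      · simp
      · have : ((k + 1 : ℕ) * ((k + 1 : ℕ) - 1) / 2 : ℂ) = (((k + 1) * k / 2 : ℝ) : ℂ) := by
          push_cast; ring
        rw [this, Complex.norm_real, Real.norm_of_nonneg (by positivity)]
        push_cast
        nlinarith [Nat.cast_nonneg (α := ℝ) k, sq_nonneg (k : ℝ)]
    calc _ ≤ ‖(1 - v) ^ k - 1 + k * v‖ + ‖(k * (k - 1) / 2 : ℂ)‖ * ‖v‖ ^ 2 := by
          rw [← norm_pow, ← norm_mul]; exact norm_sub_le _ _
      _ ≤ (k : ℝ) ^ 2 * ‖v‖ ^ 2 + (k : ℝ) ^ 2 * ‖v‖ ^ 2 := by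
          gcongr; exact norm_one_sub_pow_sub_linear_le hv k
      _ = _ := by ring
  have hx : 0 ≤ (k : ℝ) * ‖v‖ := by positivity
  have h := min_pow_le_rpow hx hδ0 hδ1 2
  rw [← Real.mul_rpow (by positivity) (by positivity)]
  norm_num at h
  rcases h with h | h
  · rw [mul_pow] at h; linarith
  · rw [mul_pow] at h
    nlinarith [Real.rpow_nonneg hx (2 + δ)]

lemma norm_mul_one_sub_pow_sub_linear_le_rpow {δ : ℝ} (hδ0 : 0 < δ) (hδ1 : δ ≤ 1)
    (hv : ‖1 - v‖ ≤ 1) (k : ℕ) :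
    ‖(k : ℂ) * (1 - v) ^ (k - 1) - k + (k * (k - 1) : ℂ) * v‖
      ≤ 2 * ((k : ℝ) ^ (2 + δ) * ‖v‖ ^ (1 + δ)) := by
  rcases k with _ | k
  · simp; positivity
  have e : ((k + 1 : ℕ) : ℂ) * (1 - v) ^ (k + 1 - 1) - (k + 1 : ℕ)
        + ((k + 1 : ℕ) * ((k + 1 : ℕ) - 1) : ℂ) * v
      = (k + 1 : ℕ) * ((1 - v) ^ k - 1 + k * v) := by
    push_cast; simp; ring
  rw [e, norm_mul, Complex.norm_natCast]
  have h2 := norm_one_sub_pow_sub_linear_le hv k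
  have h1 : ‖(1 - v) ^ k - 1 + k * v‖ ≤ 2 * (k * ‖v‖) := by
    calc _ ≤ ‖(1 - v) ^ k - 1‖ + ‖(k : ℂ) * v‖ := norm_add_le _ _
      _ ≤ k * ‖v‖ + k * ‖v‖ := by
          gcongr
          · exact norm_one_sub_pow_sub_one_le hv k
          · rw [norm_mul, Complex.norm_natCast]
      _ = _ := by ring
  have hx : 0 ≤ (k : ℝ) * ‖v‖ := by positivity
  have h := min_pow_le_rpow hx hδ0 hδ1 1
  have key : ‖(1 - v) ^ k - 1 + k * v‖ ≤ 2 * ((k : ℝ) * ‖v‖) ^ (1 + δ) := by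
    norm_num at h
    rcases h with h | h
    · linarith
    · rw [mul_pow] at h
      nlinarith [Real.rpow_nonneg hx (1 + δ)]
  have hk1 : (0 : ℝ) < ((k + 1 : ℕ) : ℝ) := by positivity
  calc _ ≤ ((k + 1 : ℕ) : ℝ) * (2 * (((k + 1 : ℕ) : ℝ) * ‖v‖) ^ (1 + δ)) := by
        gcongr
        refine key.trans ?_
        gcongr
        simp
    _ = _ := by
        rw [Real.mul_rpow hk1.le (norm_nonneg _), show (2 : ℝ) + δ = 1 + (1 + δ) by ring,
          Real.rpow_add hk1 1 (1 + δ), Real.rpow_one]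
        ring

end PowerBounds

section PGF

variable {p : ℕ → ℝ}

lemma norm_pgf_term_le (hp : ∀ k, 0 ≤ p k) {w : ℂ} (hw : ‖w‖ ≤ 1) (k : ℕ) :
    ‖(p k : ℂ) * w ^ k‖ ≤ p k := by
  rw [norm_mul, Complex.norm_real, Real.norm_of_nonneg (hp k), norm_pow]
  exact mul_le_of_le_one_right (hp k) (pow_le_one₀ (norm_nonneg _) hw)

lemma summable_pgf (hp : ∀ k, 0 ≤ p k) (hs : Summable p) {w : ℂ} (hw : ‖w‖ ≤ 1) :
    Summable fun k => (p k : ℂ) * w ^ k :=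
  Summable.of_norm_bounded hs (norm_pgf_term_le hp hw)

lemma norm_pgf_le_one (hp : ∀ k, 0 ≤ p k) (hs : HasSum p 1) {w : ℂ} (hw : ‖w‖ ≤ 1) :
    ‖pgf p w‖ ≤ 1 :=
  tsum_of_norm_bounded hs (norm_pgf_term_le hp hw)

lemma norm_pgf_le_norm (hp : ∀ k, 0 ≤ p k) (hs : HasSum p 1) (h0 : p 0 = 0) {w : ℂ}
    (hw : ‖w‖ ≤ 1) : ‖pgf p w‖ ≤ ‖w‖ := by
  have h := hs.mul_left ‖w‖
  rw [mul_one] at h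
  refine tsum_of_norm_bounded h fun k => ?_
  rcases k with _ | k
  · simp [h0]
  · rw [norm_mul, Complex.norm_real, Real.norm_of_nonneg (hp _), norm_pow, pow_succ, mul_comm]
    have : ‖w‖ ^ k * ‖w‖ ≤ 1 * ‖w‖ := by
      gcongr; exact pow_le_one₀ (norm_nonneg _) hw
    rw [one_mul] at this
    exact mul_le_mul_of_nonneg_right this (hp _)

lemma continuousOn_pgf (hp : ∀ k, 0 ≤ p k) (hs : Summable p) :
    ContinuousOn (pgf p) (Metric.closedBall 0 1) :=
  continuousOn_tsum (fun k => by fun_prop) hs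
    fun k w hw => norm_pgf_term_le hp (mem_closedBall_zero_iff.1 hw) k

lemma differentiableOn_pgf (hp : ∀ k, 0 ≤ p k) (hs : Summable p) :
    DifferentiableOn ℂ (pgf p) (Metric.ball 0 1) :=
  Complex.differentiableOn_tsum_of_summable_norm hs (fun k => by fun_prop) Metric.isOpen_ball
    fun k w hw => norm_pgf_term_le hp (mem_ball_zero_iff.1 hw).le k

lemma pgf_ofReal (x : ℝ) : pgf p x = ((∑' k, p k * x ^ k : ℝ) : ℂ) := by
  simp [pgf, Complex.ofReal_tsum]

lemma norm_pgfDeriv_term_le (hp : ∀ k, 0 ≤ p k) {w : ℂ} {r : ℝ} (hw : ‖w‖ ≤ r) (k : ℕ) :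
    ‖(p k : ℂ) * (k * w ^ (k - 1))‖ ≤ k * p k * r ^ (k - 1) := by
  rw [norm_mul, norm_mul, norm_pow, Complex.norm_real, Real.norm_of_nonneg (hp k),
    Complex.norm_natCast]
  have := hp k
  calc _ ≤ p k * (k * r ^ (k - 1)) := by gcongr
    _ = _ := by ring

lemma hasDerivAt_pgf (hp : ∀ k, 0 ≤ p k) (hs : Summable p)
    (hs1 : Summable fun k : ℕ => (k : ℝ) * p k) {w : ℂ} (hw : ‖w‖ < 1) :
    HasDerivAt (pgf p) (pgfDeriv p w) w :=
  hasDerivAt_tsum_of_isPreconnected hs1 Metric.isOpen_ball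
    (convex_ball (0 : ℂ) 1).isPreconnected
    (fun k y _ => (hasDerivAt_pow k y).const_mul (p k : ℂ))
    (fun k y hy => by
      simpa using norm_pgfDeriv_term_le hp (mem_ball_zero_iff.1 hy).le k)
    (Metric.mem_ball_self one_pos) (summable_pgf hp hs (by simp)) (mem_ball_zero_iff.2 hw)

lemma exists_norm_pgfDeriv_le (hp : ∀ k, 0 ≤ p k)
    (hs1 : HasSum (fun k : ℕ => (k : ℝ) * p k) 1) {j : ℕ} (hj : 2 ≤ j) (hpj : 0 < p j)
    {r : ℝ} (hr0 : 0 ≤ r) (hr : r < 1) :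
    ∃ κ < 1, ∀ w : ℂ, ‖w‖ ≤ r → ‖pgfDeriv p w‖ ≤ κ := by
  have hle : ∀ k : ℕ, (k : ℝ) * p k * r ^ (k - 1) ≤ k * p k := fun k =>
    mul_le_of_le_one_right (mul_nonneg k.cast_nonneg (hp k)) (pow_le_one₀ hr0 hr.le)
  have hsum : Summable fun k : ℕ => (k : ℝ) * p k * r ^ (k - 1) :=
    Summable.of_nonneg_of_le
      (fun k => mul_nonneg (mul_nonneg k.cast_nonneg (hp k)) (pow_nonneg hr0 _)) hle hs1.summable
  refine ⟨∑' k : ℕ, (k : ℝ) * p k * r ^ (k - 1), ?_, fun w hw =>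
    tsum_of_norm_bounded hsum.hasSum (norm_pgfDeriv_term_le hp hw)⟩
  rw [← hs1.tsum_eq]
  refine Summable.tsum_lt_tsum (i := j) hle ?_ hsum hs1.summable
  have : (0 : ℝ) < j * p j := mul_pos (by positivity) hpj
  exact mul_lt_of_lt_one_right this (pow_lt_one₀ hr0 hr (by omega))

/-- A pgf with positive constant term and span `1` has modulus less than `1` at every point
of the unit circle other than `1`. -/
lemma eq_one_of_norm_pgf_eq_one (hp : ∀ k, 0 ≤ p k) (hs : HasSum p 1) (hp0 : p 0 ≠ 0)
    (hspan : ∀ d : ℕ, (∀ k, p k ≠ 0 → d ∣ k) → d = 1) {w : ℂ} (hw : ‖w‖ = 1)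
    (h : ‖pgf p w‖ = 1) : w = 1 := by
  set ζ := pgf p w with hζ
  have hsum : HasSum (fun k => (p k : ℂ) * w ^ k) ζ := (summable_pgf hp hs.summable hw.le).hasSum
  have hre : HasSum (fun k => p k * (1 - ((starRingEnd ℂ) ζ * w ^ k).re)) 0 := by
    have h1 := Complex.hasSum_re (hsum.mul_left ((starRingEnd ℂ) ζ))
    have h2 := hs.sub h1
    have h3 : ((starRingEnd ℂ) ζ * ζ).re = 1 := by
      rw [← Complex.normSq_eq_conj_mul_self, Complex.ofReal_re, Complex.normSq_eq_norm_sq, h]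
      norm_num
    rw [h3, sub_self] at h2
    have e : ∀ k, p k * (1 - ((starRingEnd ℂ) ζ * w ^ k).re)
        = p k - ((starRingEnd ℂ) ζ * (p k * w ^ k)).re := fun k => by
      rw [mul_left_comm, Complex.re_ofReal_mul]
      ring
    simpa only [e] using h2
  have hnorm : ∀ k, ‖(starRingEnd ℂ) ζ * w ^ k‖ = 1 := fun k => by
    rw [norm_mul, norm_pow, hw, RCLike.norm_conj, h]; simp
  have hz := (hasSum_zero_iff_of_nonneg (fun k => mul_nonneg (hp k) (by
    have := Complex.re_le_norm ((starRingEnd ℂ) ζ * w ^ k)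
    rw [hnorm] at this
    simpa using this))).1 hre
  have heq : ∀ k, p k ≠ 0 → (starRingEnd ℂ) ζ * w ^ k = 1 := fun k hk => by
    have h1 := congrFun hz k
    have h2 : ((starRingEnd ℂ) ζ * w ^ k).re = 1 := by
      rcases mul_eq_zero.1 h1 with h1 | h1
      · exact absurd h1 hk
      · linarith
    have h4 := Complex.sq_norm_sub_sq_re ((starRingEnd ℂ) ζ * w ^ k)
    rw [hnorm, h2] at h4
    apply Complex.ext
    · simpa using h2
    · have : ((starRingEnd ℂ) ζ * w ^ k).im ^ 2 = 0 := by linarith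
      simpa using this
  have h0 : (starRingEnd ℂ) ζ = 1 := by simpa using heq 0 hp0
  refine orderOf_eq_one_iff.1 (hspan _ fun k hk => orderOf_dvd_of_pow_eq_one ?_)
  simpa [h0] using heq k hk

lemma pgf_expansion (hp : ∀ k, 0 ≤ p k) (hs : HasSum p 1)
    (hs1 : HasSum (fun k : ℕ => (k : ℝ) * p k) 1) {s M δ : ℝ}
    (hs2 : HasSum (fun k : ℕ => (k : ℝ) * ((k : ℝ) - 1) * p k) s) (hδ0 : 0 < δ) (hδ1 : δ ≤ 1)
    (hM : HasSum (fun k : ℕ => (k : ℝ) ^ (2 + δ) * p k) M) {v : ℂ} (hv : ‖1 - v‖ ≤ 1) :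
    ‖pgf p (1 - v) - (1 - v + s / 2 * v ^ 2)‖ ≤ 2 * M * ‖v‖ ^ (2 + δ) := by
  have a0 := summable_pgf hp hs.summable hv |>.hasSum
  have a1 := Complex.hasSum_ofReal.2 hs
  have a2 := (Complex.hasSum_ofReal.2 hs1).mul_right v
  have a3 := (Complex.hasSum_ofReal.2 hs2).mul_right (v ^ 2 / 2)
  have h := ((a0.sub a1).add a2).sub a3
  have e : pgf p (1 - v) - (1 - v + s / 2 * v ^ 2)
      = ∑' k : ℕ, (p k : ℂ) * ((1 - v) ^ k - 1 + k * v - (k * (k - 1) / 2 : ℂ) * v ^ 2) := by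
    convert h.tsum_eq.symm using 1
    · push_cast [pgf]; ring
    · refine tsum_congr fun k => ?_
      push_cast; ring
  rw [e]
  refine tsum_of_norm_bounded (g := fun k : ℕ => 2 * ((k : ℝ) ^ (2 + δ) * p k) * ‖v‖ ^ (2 + δ))
    ((hM.mul_left 2).mul_right _) fun k => ?_
  rw [norm_mul, Complex.norm_real, Real.norm_of_nonneg (hp k)]
  calc _ ≤ p k * (2 * ((k : ℝ) ^ (2 + δ) * ‖v‖ ^ (2 + δ))) :=
        mul_le_mul_of_nonneg_left (norm_one_sub_pow_sub_quadratic_le_rpow hδ0 hδ1 hv k) (hp k)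
    _ = _ := by ring

lemma pgfDeriv_expansion (hp : ∀ k, 0 ≤ p k)
    (hs1 : HasSum (fun k : ℕ => (k : ℝ) * p k) 1) {s M δ : ℝ}
    (hs2 : HasSum (fun k : ℕ => (k : ℝ) * ((k : ℝ) - 1) * p k) s) (hδ0 : 0 < δ) (hδ1 : δ ≤ 1)
    (hM : HasSum (fun k : ℕ => (k : ℝ) ^ (2 + δ) * p k) M) {v : ℂ} (hv : ‖1 - v‖ ≤ 1) :
    ‖pgfDeriv p (1 - v) - (1 - s * v)‖ ≤ 2 * M * ‖v‖ ^ (1 + δ) := by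
  have a0 : HasSum (fun k : ℕ => (p k : ℂ) * (k * (1 - v) ^ (k - 1))) (pgfDeriv p (1 - v)) :=
    (Summable.of_norm_bounded hs1.summable fun k => by
      simpa using norm_pgfDeriv_term_le hp hv k).hasSum
  have a1 := Complex.hasSum_ofReal.2 hs1
  have a2 := (Complex.hasSum_ofReal.2 hs2).mul_right v
  have h := (a0.sub a1).add a2
  have e : pgfDeriv p (1 - v) - (1 - s * v)
      = ∑' k : ℕ, (p k : ℂ) * (k * (1 - v) ^ (k - 1) - k + (k * (k - 1) : ℂ) * v) := by
    convert h.tsum_eq.symm using 1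
    · push_cast [pgf]; ring
    · refine tsum_congr fun k => ?_
      push_cast; ring
  rw [e]
  refine tsum_of_norm_bounded (g := fun k : ℕ => 2 * ((k : ℝ) ^ (2 + δ) * p k) * ‖v‖ ^ (1 + δ))
    ((hM.mul_left 2).mul_right _) fun k => ?_
  rw [norm_mul, Complex.norm_real, Real.norm_of_nonneg (hp k)]
  calc _ ≤ p k * (2 * ((k : ℝ) ^ (2 + δ) * ‖v‖ ^ (1 + δ))) :=
        mul_le_mul_of_nonneg_left (norm_mul_one_sub_pow_sub_linear_le_rpow hδ0 hδ1 hv k) (hp k)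
    _ = _ := by ring

end PGF

section TreeEquation

variable {p q : ℕ → ℝ}

lemma coeff_zero_ne_zero (hp : ∀ k, 0 ≤ p k) (hs : HasSum p 1)
    (hs1 : HasSum (fun k : ℕ => (k : ℝ) * p k) 1)
    (hσ : 0 < ∑' k : ℕ, (k : ℝ) * ((k : ℝ) - 1) * p k) : p 0 ≠ 0 := by
  intro h0
  have h := hs1.sub hs
  rw [sub_self] at h
  have hz := (hasSum_zero_iff_of_nonneg (fun k => by
    rcases k with _ | k
    · simp [h0]
    · have := mul_nonneg (Nat.cast_nonneg (α := ℝ) k) (hp (k + 1))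
      push_cast
      linarith)).1 h
  have : ∀ k : ℕ, (k : ℝ) * ((k : ℝ) - 1) * p k = 0 := fun k => by
    have h1 : (k : ℝ) * p k - p k = 0 := congrFun hz k
    linear_combination (k : ℝ) * h1
  simp [this] at hσ

lemma exists_two_le_coeff_pos (hp : ∀ k, 0 ≤ p k)
    (hσ : 0 < ∑' k : ℕ, (k : ℝ) * ((k : ℝ) - 1) * p k) : ∃ j, 2 ≤ j ∧ 0 < p j := by
  by_contra! h
  have : ∀ k : ℕ, (k : ℝ) * ((k : ℝ) - 1) * p k = 0 := fun k => by
    rcases k with _ | _ | k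
    · simp
    · simp
    · rw [le_antisymm (h (k + 2) (by omega)) (hp _), mul_zero]
  simp [this] at hσ

lemma pgf_fixedPoint_of_norm_lt_one (hp : ∀ k, 0 ≤ p k) (hs : Summable p)
    (hq0 : q 0 = 0) (hq : ∀ k, 0 ≤ q k) (hqs : HasSum q 1)
    (hfix : ∀ z ∈ Set.Icc (0:ℝ) 1,
      (∑' n, q n * z ^ n) = z * ∑' k, p k * (∑' n, q n * z ^ n) ^ k)
    {z : ℂ} (hz : ‖z‖ < 1) : pgf q z = z * pgf p (pgf q z) := by
  have hdq := differentiableOn_pgf hq hqs.summable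
  have hmaps : Set.MapsTo (pgf q) (Metric.ball 0 1) (Metric.ball 0 1) := fun w hw => by
    rw [mem_ball_zero_iff] at hw ⊢
    exact (norm_pgf_le_norm hq hqs hq0 hw.le).trans_lt hw
  have hdr : DifferentiableOn ℂ (fun z => z * pgf p (pgf q z)) (Metric.ball 0 1) :=
    differentiableOn_id.mul ((differentiableOn_pgf hp hs).comp hdq hmaps)
  refine (hdq.analyticOnNhd Metric.isOpen_ball).eqOn_of_preconnected_of_frequently_eq
    (hdr.analyticOnNhd Metric.isOpen_ball) (convex_ball (0 : ℂ) 1).isPreconnected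
    (Metric.mem_ball_self one_pos) ?_ (mem_ball_zero_iff.2 hz)
  have hreal : ∀ x ∈ Set.Ioo (0 : ℝ) 1, pgf q x = x * pgf p (pgf q x) := fun x hx => by
    have := hfix x ⟨hx.1.le, hx.2.le⟩
    rw [pgf_ofReal, pgf_ofReal, ← Complex.ofReal_mul, ← this]
  have ht : Filter.Tendsto (fun x : ℝ => (x : ℂ)) (nhdsWithin 0 (Set.Ioi 0))
      (nhdsWithin 0 {0}ᶜ) := by
    refine tendsto_nhdsWithin_iff.2 ⟨?_, ?_⟩
    · exact (Complex.continuous_ofReal.tendsto' 0 0 (by simp)).mono_left nhdsWithin_le_nhds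
    · filter_upwards [self_mem_nhdsWithin] with x hx
      simpa using (ne_of_gt hx : x ≠ 0)
  refine ht.frequently (Filter.Eventually.frequently ?_)
  filter_upwards [Ioo_mem_nhdsGT (zero_lt_one' ℝ)] with x hx using hreal x hx

lemma pgf_fixedPoint (hp : ∀ k, 0 ≤ p k) (hs : Summable p)
    (hq0 : q 0 = 0) (hq : ∀ k, 0 ≤ q k) (hqs : HasSum q 1)
    (hfix : ∀ z ∈ Set.Icc (0:ℝ) 1,
      (∑' n, q n * z ^ n) = z * ∑' k, p k * (∑' n, q n * z ^ n) ^ k)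
    {z : ℂ} (hz : ‖z‖ ≤ 1) : pgf q z = z * pgf p (pgf q z) := by
  have hcl : closure (Metric.ball (0 : ℂ) 1) = Metric.closedBall 0 1 :=
    closure_ball 0 one_ne_zero
  have hcq := continuousOn_pgf hq hqs.summable
  have hmaps : Set.MapsTo (pgf q) (Metric.closedBall 0 1) (Metric.closedBall 0 1) := fun w hw => by
    rw [mem_closedBall_zero_iff] at hw ⊢
    exact norm_pgf_le_one hq hqs hw
  have hcr : ContinuousOn (fun z => z * pgf p (pgf q z)) (Metric.closedBall 0 1) :=
    continuousOn_id.mul ((continuousOn_pgf hp hs).comp hcq hmaps)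
  have hE : Set.EqOn (pgf q) (fun z => z * pgf p (pgf q z)) (Metric.ball 0 1) := fun w hw =>
    pgf_fixedPoint_of_norm_lt_one hp hs hq0 hq hqs hfix (mem_ball_zero_iff.1 hw)
  exact hE.of_subset_closure hcq hcr Metric.ball_subset_closedBall hcl.ge
    (mem_closedBall_zero_iff.2 hz)

lemma norm_pgf_lt_one_of_fixedPoint (hp : ∀ k, 0 ≤ p k) (hs : HasSum p 1) (hp0 : p 0 ≠ 0)
    (hspan : ∀ d : ℕ, (∀ k, p k ≠ 0 → d ∣ k) → d = 1)
    (hq0 : q 0 = 0) (hq : ∀ k, 0 ≤ q k) (hqs : HasSum q 1)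
    (hfix : ∀ z : ℂ, ‖z‖ ≤ 1 → pgf q z = z * pgf p (pgf q z))
    {z : ℂ} (hz : ‖z‖ ≤ 1) (hz1 : z ≠ 1) : ‖pgf q z‖ < 1 := by
  refine lt_of_le_of_ne (norm_pgf_le_one hq hqs hz) fun h => hz1 ?_
  have hz' : ‖z‖ = 1 := le_antisymm hz (h ▸ norm_pgf_le_norm hq hqs hq0 hz)
  have h1 := hfix z hz
  have h2 : ‖pgf p (pgf q z)‖ = 1 := by
    have := congrArg norm h1
    rwa [norm_mul, hz', one_mul, h, eq_comm] at this
  have h3 := eq_one_of_norm_pgf_eq_one hp hs hp0 hspan h h2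
  have h4 : pgf p 1 = 1 := by simpa [hs.tsum_eq] using pgf_ofReal (p := p) 1
  rw [h3, h4, mul_one] at h1
  exact h1.symm

end TreeEquation

section FixedPoint

variable {Φ Φ' : ℂ → ℂ}

lemma norm_mul_sub_mul_le {S : Set ℂ} (hS : Convex ℝ S) (hd : ∀ w ∈ S, HasDerivAt Φ (Φ' w) w)
    {z : ℂ} {κ : ℝ} (hκ : ∀ w ∈ S, ‖z‖ * ‖Φ' w‖ ≤ κ) {a b : ℂ} (ha : a ∈ S) (hb : b ∈ S) :
    ‖z * Φ a - z * Φ b‖ ≤ κ * ‖a - b‖ :=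
  hS.norm_image_sub_le_of_norm_hasDerivWithin_le (f := fun w => z * Φ w)
    (f' := fun w => z * Φ' w) (fun w hw => ((hd w hw).const_mul z).hasDerivWithinAt)
    (fun w hw => by rw [norm_mul]; exact hκ w hw) hb ha

lemma eq_of_fixedPoint {S : Set ℂ} (hS : Convex ℝ S) (hd : ∀ w ∈ S, HasDerivAt Φ (Φ' w) w)
    {z : ℂ} {κ : ℝ} (hκ1 : κ < 1) (hκ : ∀ w ∈ S, ‖z‖ * ‖Φ' w‖ ≤ κ) {a b : ℂ} (ha : a ∈ S)
    (hb : b ∈ S) (hfa : a = z * Φ a) (hfb : b = z * Φ b) : a = b := by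
  have h := norm_mul_sub_mul_le hS hd hκ ha hb
  rw [← hfa, ← hfb] at h
  have : ‖a - b‖ = 0 := by nlinarith [norm_nonneg (a - b)]
  simpa [sub_eq_zero] using this

lemma exists_fixedPoint_mem_closedBall {z c : ℂ} {r κ : ℝ} (hr : 0 ≤ r) (hκ1 : κ < 1)
    (hd : ∀ w ∈ Metric.closedBall c r, HasDerivAt Φ (Φ' w) w)
    (hκ : ∀ w ∈ Metric.closedBall c r, ‖z‖ * ‖Φ' w‖ ≤ κ)
    (hc : ‖z * Φ c - c‖ ≤ (1 - κ) * r) :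
    ∃ w ∈ Metric.closedBall c r, w = z * Φ w := by
  have hcm : c ∈ Metric.closedBall c r := Metric.mem_closedBall_self hr
  have hκ0 : 0 ≤ κ := (by positivity : 0 ≤ ‖z‖ * ‖Φ' c‖).trans (hκ c hcm)
  have hl := fun a (ha : a ∈ Metric.closedBall c r) b (hb : b ∈ Metric.closedBall c r) =>
    norm_mul_sub_mul_le (convex_closedBall c r) hd hκ ha hb
  have hm : Set.MapsTo (fun w => z * Φ w) (Metric.closedBall c r) (Metric.closedBall c r) := by
    intro w hw
    have h1 := hl w hw c hcm
    rw [mem_closedBall_iff_norm] at hw ⊢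
    calc ‖z * Φ w - c‖ ≤ ‖z * Φ w - z * Φ c‖ + ‖z * Φ c - c‖ := norm_sub_le_norm_sub_add_norm_sub ..
      _ ≤ κ * r + (1 - κ) * r := by
        gcongr
        exact h1.trans (by gcongr)
      _ = r := by ring
  have hcw : ContractingWith ⟨κ, hκ0⟩ (hm.restrict _ _ _) := by
    refine ⟨by exact_mod_cast hκ1, LipschitzWith.of_dist_le_mul fun a b => ?_⟩
    have := hl a a.2 b b.2
    rw [← dist_eq_norm, ← dist_eq_norm] at this
    exact this
  obtain ⟨w, hw, hf, -⟩ := hcw.exists_fixedPoint' Metric.isClosed_closedBall.isComplete hm hcm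
    (edist_ne_top _ _)
  exact ⟨w, hw, hf.symm⟩

/-- A selection of solutions of `w = z * Φ w` staying in a convex set on which `z * Φ` is
contracting is holomorphic. -/
lemma hasDerivAt_of_fixedPoint {S : Set ℂ} (hS : Convex ℝ S)
    (hd : ∀ w ∈ S, HasDerivAt Φ (Φ' w) w) (hΦ : ∀ w ∈ S, ‖Φ w‖ ≤ 1) (hΦ0 : Φ 0 ≠ 0)
    {z₀ : ℂ} {κ : ℝ} (hκ1 : κ < 1) (hκ : ∀ w ∈ S, ‖z₀‖ * ‖Φ' w‖ ≤ κ) {Y : ℂ → ℂ}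
    (hYS : ∀ᶠ z in nhds z₀, Y z ∈ S) (hY : ∀ᶠ z in nhds z₀, Y z = z * Φ (Y z)) :
    HasDerivAt Y (Φ (Y z₀) / (1 - z₀ * Φ' (Y z₀))) z₀ := by
  have hY₀S := hYS.self_of_nhds
  have hY₀ := hY.self_of_nhds
  have hne : ∀ z, Y z = z * Φ (Y z) → Φ (Y z) ≠ 0 := fun z hz h => by
    rw [h, mul_zero] at hz
    rw [hz] at h
    exact hΦ0 h
  have hcont : ContinuousAt Y z₀ := by
    have hb : ∀ᶠ z in nhds z₀, dist (Y z) (Y z₀) ≤ (1 - κ)⁻¹ * dist z z₀ := by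
      filter_upwards [hYS, hY] with z hzS hz
      have h1 := norm_mul_sub_mul_le hS hd hκ hzS hY₀S
      have h2 : ‖(z - z₀) * Φ (Y z)‖ ≤ ‖z - z₀‖ := by
        rw [norm_mul]; exact mul_le_of_le_one_right (norm_nonneg _) (hΦ _ hzS)
      have h3 : Y z - Y z₀ = (z - z₀) * Φ (Y z) + (z₀ * Φ (Y z) - z₀ * Φ (Y z₀)) := by
        rw [sub_mul, ← hz, ← hY₀]; ring
      have h4 : ‖Y z - Y z₀‖ ≤ ‖z - z₀‖ + κ * ‖Y z - Y z₀‖ := by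
        conv_lhs => rw [h3]
        exact (norm_add_le _ _).trans (add_le_add h2 h1)
      rw [dist_eq_norm, dist_eq_norm, ← div_eq_inv_mul, le_div_iff₀ (by linarith)]
      linarith
    refine tendsto_iff_dist_tendsto_zero.2 (squeeze_zero' (Filter.Eventually.of_forall fun _ =>
      dist_nonneg) hb ?_)
    have : Filter.Tendsto (fun z => (1 - κ)⁻¹ * dist z z₀) (nhds z₀)
        (nhds ((1 - κ)⁻¹ * dist z₀ z₀)) := Continuous.tendsto (by fun_prop) z₀
    simpa using this
  have hden : 1 - z₀ * Φ' (Y z₀) ≠ 0 := fun h => by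
    have := hκ _ hY₀S
    rw [← norm_mul, ← sub_eq_zero.1 h, norm_one] at this
    linarith
  have hF : HasDerivAt (fun w => w / Φ w) ((1 - z₀ * Φ' (Y z₀)) / Φ (Y z₀)) (Y z₀) := by
    have h := (hasDerivAt_id (Y z₀)).div (hd _ hY₀S) (hne z₀ hY₀)
    refine h.congr_deriv ?_
    have hn := hne z₀ hY₀
    rw [div_eq_div_iff (pow_ne_zero 2 hn) hn]
    simp only [id]
    linear_combination (-Φ (Y z₀) * Φ' (Y z₀)) * hY₀
  have h := HasDerivAt.of_local_left_inverse hcont hF (div_ne_zero hden (hne z₀ hY₀)) (by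
    filter_upwards [hY] with z hz
    rw [div_eq_iff (hne z hz)]
    exact hz)
  rwa [inv_div] at h

end FixedPoint

section LocalAnalysis

lemma re_and_norm_bounds_of_near {v₀ v : ℂ} (hre : ‖v₀‖ / 2 ≤ v₀.re) (hv : ‖v - v₀‖ ≤ ‖v₀‖ / 4) :
    ‖v₀‖ / 4 ≤ v.re ∧ ‖v‖ ≤ 5 / 4 * ‖v₀‖ := by
  have h1 := (Complex.abs_re_le_norm (v - v₀)).trans hv
  rw [Complex.sub_re, abs_le] at h1
  have h2 := norm_sub_norm_le v v₀
  constructor <;> linarith [h1.1]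

lemma norm_one_sub_mul_le {v : ℂ} {a t : ℝ} (ha : 0 ≤ a) (ht : 0 ≤ t) (hta : t * a ≤ 4 / 25)
    (hre : a / 4 ≤ v.re) (hv : ‖v‖ ≤ 5 / 4 * a) : ‖1 - t * v‖ ≤ 1 - t * a / 8 := by
  refine abs_le_of_sq_le_sq' ?_ (by linarith) |>.2
  have h1 : ‖v‖ ^ 2 ≤ (5 / 4 * a) ^ 2 := by gcongr
  have h2 : ‖1 - t * v‖ ^ 2 = 1 - 2 * (t * v.re) + t ^ 2 * ‖v‖ ^ 2 := by
    rw [Complex.sq_norm, Complex.sq_norm, Complex.normSq_apply, Complex.normSq_apply]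
    simp
    ring
  rw [h2]
  have h3 : t ^ 2 * ‖v‖ ^ 2 ≤ t ^ 2 * (5 / 4 * a) ^ 2 := by gcongr
  have h4 : t * (a / 4) ≤ t * v.re := by gcongr
  have h5 : 0 ≤ t * a := by positivity
  nlinarith

lemma rpow_le_two_mul_rpow {x a δ : ℝ} (hx : 0 ≤ x) (hxa : x ≤ 5 / 4 * a) (ha : 0 ≤ a)
    (hδ0 : 0 < δ) (hδ1 : δ ≤ 1) : x ^ (1 + δ) ≤ 2 * a ^ (1 + δ) := by
  calc x ^ (1 + δ) ≤ (5 / 4 * a) ^ (1 + δ) := by gcongr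
    _ = (5 / 4) ^ (1 + δ) * a ^ (1 + δ) := Real.mul_rpow (by norm_num) ha
    _ ≤ (5 / 4) ^ (2 : ℝ) * a ^ (1 + δ) := by
        gcongr
        · norm_num
        · linarith
    _ ≤ _ := by
        gcongr
        norm_num

variable {Φ Φ' : ℂ → ℂ} {s M δ : ℝ}

/-- Near the critical point, `w ↦ z * Φ w` contracts a disc around the approximate fixed point. -/
lemma local_contraction (hs : 0 < s) (hM : 0 ≤ M) (hδ0 : 0 < δ) (hδ1 : δ ≤ 1)
    (hE' : ∀ v : ℂ, ‖1 - v‖ ≤ 1 → ‖Φ' (1 - v) - (1 - s * v)‖ ≤ M * ‖v‖ ^ (1 + δ))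
    {v₀ : ℂ} (hv₀ : v₀ ≠ 0) (hre : ‖v₀‖ / 2 ≤ v₀.re) (ha : ‖v₀‖ ≤ 1 / 16)
    (hsa : s * ‖v₀‖ ≤ 4 / 25) (hMa : (M + s / 2) * ‖v₀‖ ^ δ ≤ s / 256)
    {w : ℂ} (hw : w ∈ Metric.closedBall (1 - v₀) (‖v₀‖ / 4)) :
    ‖w‖ ≤ 1 - ‖v₀‖ / 8 ∧ ‖1 - s / 2 * v₀ ^ 2‖ * ‖Φ' w‖ ≤ 1 - s * ‖v₀‖ / 32 := by
  obtain ⟨v, rfl⟩ : ∃ v, w = 1 - v := ⟨1 - w, by ring⟩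
  rw [mem_closedBall_iff_norm'] at hw
  have hv : ‖v - v₀‖ ≤ ‖v₀‖ / 4 := by
    rwa [show v - v₀ = 1 - v₀ - (1 - v) by ring]
  obtain ⟨h1, h2⟩ := re_and_norm_bounds_of_near hre hv
  have ha0 : 0 < ‖v₀‖ := norm_pos_iff.2 hv₀
  have h3 : ‖1 - v‖ ≤ 1 - ‖v₀‖ / 8 := by
    simpa using norm_one_sub_mul_le (t := 1) ha0.le zero_le_one (by linarith) h1 h2
  refine ⟨h3, ?_⟩
  have h4 := norm_one_sub_mul_le ha0.le hs.le hsa h1 h2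
  have h5 := hE' v (by linarith)
  have h6 : M * ‖v‖ ^ (1 + δ) ≤ s * ‖v₀‖ / 16 := by
    have := rpow_le_two_mul_rpow (norm_nonneg v) h2 ha0.le hδ0 hδ1
    have e : ‖v₀‖ ^ (1 + δ) = ‖v₀‖ * ‖v₀‖ ^ δ := by rw [Real.rpow_add ha0, Real.rpow_one]
    calc M * ‖v‖ ^ (1 + δ) ≤ M * (2 * ‖v₀‖ ^ (1 + δ)) := by gcongr
      _ = 2 * ‖v₀‖ * (M * ‖v₀‖ ^ δ) := by rw [e]; ring
      _ ≤ 2 * ‖v₀‖ * (s / 256) := by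
        gcongr
        refine le_trans ?_ hMa
        gcongr
        linarith
      _ ≤ _ := by nlinarith
  have h7 : ‖Φ' (1 - v)‖ ≤ 1 - s * ‖v₀‖ / 16 := by
    have := norm_le_norm_add_norm_sub' (Φ' (1 - v)) (1 - s * v : ℂ)
    linarith
  have h8 : ‖1 - s / 2 * v₀ ^ 2‖ ≤ 1 + s / 2 * ‖v₀‖ ^ 2 := by
    refine (norm_sub_le _ _).trans ?_
    rw [norm_one, norm_mul, norm_pow, norm_div, Complex.norm_real, Real.norm_of_nonneg hs.le]
    norm_num
  calc _ ≤ (1 + s / 2 * ‖v₀‖ ^ 2) * (1 - s * ‖v₀‖ / 16) := by gcongr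
    _ ≤ _ := by
      have : s * ‖v₀‖ * ‖v₀‖ ≤ s * ‖v₀‖ * (1 / 16) := by gcongr
      have : 0 ≤ s / 2 * ‖v₀‖ ^ 2 * (s * ‖v₀‖) := by positivity
      nlinarith

lemma local_defect (hs : 0 < s) (hδ1 : δ ≤ 1)
    (hL : ∀ v : ℂ, ‖1 - v‖ < 1 → ‖Φ (1 - v) - 1‖ ≤ ‖v‖)
    (hE : ∀ v : ℂ, ‖1 - v‖ ≤ 1 → ‖Φ (1 - v) - (1 - v + s / 2 * v ^ 2)‖ ≤ M * ‖v‖ ^ (2 + δ))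
    {v₀ : ℂ} (hv₀ : v₀ ≠ 0) (ha : ‖v₀‖ ≤ 1) (hv₁ : ‖1 - v₀‖ < 1) :
    ‖(1 - s / 2 * v₀ ^ 2) * Φ (1 - v₀) - (1 - v₀)‖ ≤ (M + s / 2) * ‖v₀‖ ^ (2 + δ) := by
  have ha0 : 0 < ‖v₀‖ := norm_pos_iff.2 hv₀
  have e : (1 - s / 2 * v₀ ^ 2) * Φ (1 - v₀) - (1 - v₀)
      = (Φ (1 - v₀) - (1 - v₀ + s / 2 * v₀ ^ 2)) - s / 2 * v₀ ^ 2 * (Φ (1 - v₀) - 1) := by ring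
  have h3 : ‖v₀‖ ^ 3 ≤ ‖v₀‖ ^ (2 + δ) := by
    rw [← Real.rpow_natCast]
    exact Real.rpow_le_rpow_of_exponent_ge ha0 ha (by push_cast; linarith)
  rw [e]
  calc _ ≤ M * ‖v₀‖ ^ (2 + δ) + s / 2 * ‖v₀‖ ^ 2 * ‖v₀‖ := by
        refine (norm_sub_le _ _).trans (add_le_add (hE v₀ hv₁.le) ?_)
        rw [norm_mul, norm_mul, norm_pow, norm_div, Complex.norm_real, Real.norm_of_nonneg hs.le]
        norm_num
        gcongr
        exact hL v₀ hv₁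
    _ = M * ‖v₀‖ ^ (2 + δ) + s / 2 * ‖v₀‖ ^ 3 := by ring
    _ ≤ M * ‖v₀‖ ^ (2 + δ) + s / 2 * ‖v₀‖ ^ (2 + δ) := by gcongr
    _ = _ := by ring

lemma local_exists_fixedPoint (hs : 0 < s) (hM : 0 ≤ M) (hδ0 : 0 < δ) (hδ1 : δ ≤ 1)
    (hd : ∀ w : ℂ, ‖w‖ < 1 → HasDerivAt Φ (Φ' w) w)
    (hL : ∀ v : ℂ, ‖1 - v‖ < 1 → ‖Φ (1 - v) - 1‖ ≤ ‖v‖)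
    (hE : ∀ v : ℂ, ‖1 - v‖ ≤ 1 → ‖Φ (1 - v) - (1 - v + s / 2 * v ^ 2)‖ ≤ M * ‖v‖ ^ (2 + δ))
    (hE' : ∀ v : ℂ, ‖1 - v‖ ≤ 1 → ‖Φ' (1 - v) - (1 - s * v)‖ ≤ M * ‖v‖ ^ (1 + δ))
    {v₀ : ℂ} (hv₀ : v₀ ≠ 0) (hre : ‖v₀‖ / 2 ≤ v₀.re) (ha : ‖v₀‖ ≤ 1 / 16)
    (hsa : s * ‖v₀‖ ≤ 4 / 25) (hMa : (M + s / 2) * ‖v₀‖ ^ δ ≤ s / 256) :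
    ∃ w ∈ Metric.closedBall (1 - v₀) (‖v₀‖ / 8), w = (1 - s / 2 * v₀ ^ 2) * Φ w := by
  have ha0 : 0 < ‖v₀‖ := norm_pos_iff.2 hv₀
  have hsub : Metric.closedBall (1 - v₀) (‖v₀‖ / 8) ⊆ Metric.closedBall (1 - v₀) (‖v₀‖ / 4) :=
    Metric.closedBall_subset_closedBall (by linarith)
  have hc := fun w hw => local_contraction hs hM hδ0 hδ1 hE' hv₀ hre ha hsa hMa (w := w) (hsub hw)
  have hv₁ : ‖1 - v₀‖ < 1 :=
    (hc _ (Metric.mem_closedBall_self (by positivity))).1.trans_lt (by linarith)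
  refine exists_fixedPoint_mem_closedBall (κ := 1 - s * ‖v₀‖ / 32) (by positivity)
    (by linarith [mul_pos hs ha0])
    (fun w hw => hd w ((hc w hw).1.trans_lt (by linarith))) (fun w hw => (hc w hw).2)
    ((local_defect hs hδ1 hL hE hv₀ (by linarith) hv₁).trans ?_)
  calc (M + s / 2) * ‖v₀‖ ^ (2 + δ) = ‖v₀‖ ^ 2 * ((M + s / 2) * ‖v₀‖ ^ δ) := by
        rw [Real.rpow_add ha0, Real.rpow_two]; ring
    _ ≤ ‖v₀‖ ^ 2 * (s / 256) := by gcongr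
    _ = _ := by ring

lemma local_estimates (hs : 0 < s) (hM : 0 ≤ M) (hδ0 : 0 < δ) (hδ1 : δ ≤ 1)
    (hd : ∀ w : ℂ, ‖w‖ < 1 → HasDerivAt Φ (Φ' w) w)
    (hL : ∀ v : ℂ, ‖1 - v‖ < 1 → ‖Φ (1 - v) - 1‖ ≤ ‖v‖)
    (hΦ' : ∀ w : ℂ, ‖w‖ < 1 → ‖Φ' w‖ ≤ 1)
    (hE : ∀ v : ℂ, ‖1 - v‖ ≤ 1 → ‖Φ (1 - v) - (1 - v + s / 2 * v ^ 2)‖ ≤ M * ‖v‖ ^ (2 + δ))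
    (hE' : ∀ v : ℂ, ‖1 - v‖ ≤ 1 → ‖Φ' (1 - v) - (1 - s * v)‖ ≤ M * ‖v‖ ^ (1 + δ)) :
    ∃ K, 0 ≤ K ∧ ∀ v₀ : ℂ, v₀ ≠ 0 → ‖v₀‖ / 2 ≤ v₀.re → ‖v₀‖ ≤ 1 / 16 → s * ‖v₀‖ ≤ 4 / 25 →
      (M + s / 2) * ‖v₀‖ ^ δ ≤ s / 256 →
      ∀ w ∈ Metric.closedBall (1 - v₀) (‖v₀‖ / 4), w = (1 - s / 2 * v₀ ^ 2) * Φ w →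
        ‖w - (1 - v₀)‖ ≤ K * ‖v₀‖ ^ (1 + δ) ∧
        ‖1 / (1 - (1 - s / 2 * v₀ ^ 2) * Φ' w) - 1 / (s * v₀)‖ ≤ K * ‖v₀‖ ^ (δ - 1) ∧
        ‖Φ w / (1 - (1 - s / 2 * v₀ ^ 2) * Φ' w) - 1 / (s * v₀)‖ ≤ K * ‖v₀‖ ^ (δ - 1) := by
  set K₁ := 32 / s * (M + s / 2) with hK₁
  set K₂ := 32 / s ^ 2 * (s * K₁ + 2 * M + s / 2) with hK₂
  have hK₁0 : 0 ≤ K₁ := by positivity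
  have hK₂0 : 0 ≤ K₂ := by positivity
  refine ⟨K₁ + K₂ + 40 / s, by positivity, ?_⟩
  intro v₀ hv₀ hre ha hsa hMa w hw hfix
  have ha0 : 0 < ‖v₀‖ := norm_pos_iff.2 hv₀
  have hc := fun w hw => local_contraction hs hM hδ0 hδ1 hE' hv₀ hre ha hsa hMa (w := w) hw
  have hcen : (1 - v₀) ∈ Metric.closedBall (1 - v₀) (‖v₀‖ / 4) :=
    Metric.mem_closedBall_self (by positivity)
  have hv₁ : ‖1 - v₀‖ < 1 := (hc _ hcen).1.trans_lt (by linarith)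
  have hw1 : ‖w‖ < 1 := (hc _ hw).1.trans_lt (by linarith)
  have hdef := local_defect hs hδ1 hL hE hv₀ (by linarith) hv₁
  have hlip := norm_mul_sub_mul_le (convex_closedBall (1 - v₀) (‖v₀‖ / 4))
    (fun w hw => hd w ((hc w hw).1.trans_lt (by linarith))) (fun w hw => (hc w hw).2) hw hcen
  have hsv : s * ‖v₀‖ / 32 > 0 := by positivity
  set z : ℂ := 1 - s / 2 * v₀ ^ 2 with hz
  have hpow2 : ‖v₀‖ ^ (2 + δ) = ‖v₀‖ * ‖v₀‖ ^ (1 + δ) := by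
    rw [show 2 + δ = 1 + (1 + δ) by ring, Real.rpow_add ha0 1, Real.rpow_one]
  have hpow1 : ‖v₀‖ ^ (1 + δ) = ‖v₀‖ ^ 2 * ‖v₀‖ ^ (δ - 1) := by
    rw [← Real.rpow_two, ← Real.rpow_add ha0]; congr 1; ring
  have hP : 0 ≤ ‖v₀‖ ^ (δ - 1) := by positivity
  have hP1 : 1 ≤ ‖v₀‖ ^ (δ - 1) :=
    Real.one_le_rpow_of_pos_of_le_one_of_nonpos ha0 (by linarith) (by linarith)
  have hA : ‖w - (1 - v₀)‖ ≤ K₁ * ‖v₀‖ ^ (1 + δ) := by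
    have h1 : ‖w - (1 - v₀)‖ ≤ ‖z * Φ w - z * Φ (1 - v₀)‖ + ‖z * Φ (1 - v₀) - (1 - v₀)‖ := by
      conv_lhs => rw [hfix]
      exact norm_sub_le_norm_sub_add_norm_sub ..
    have h2 : s * ‖v₀‖ / 32 * ‖w - (1 - v₀)‖ ≤ (M + s / 2) * (‖v₀‖ * ‖v₀‖ ^ (1 + δ)) := by
      rw [← hpow2]; linarith
    have h3 : K₁ * ‖v₀‖ ^ (1 + δ)
        = (M + s / 2) * (‖v₀‖ * ‖v₀‖ ^ (1 + δ)) / (s * ‖v₀‖ / 32) := by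
      rw [hK₁]; field_simp
    rw [h3, le_div_iff₀ hsv]
    linarith
  obtain ⟨v, rfl⟩ : ∃ v, w = 1 - v := ⟨1 - w, by ring⟩
  have hvv : ‖v - v₀‖ ≤ K₁ * ‖v₀‖ ^ (1 + δ) := by
    rwa [norm_sub_rev, show v₀ - v = 1 - v - (1 - v₀) by ring]
  have hv2 : ‖v‖ ≤ 5 / 4 * ‖v₀‖ := by
    rw [mem_closedBall_iff_norm'] at hw
    exact (re_and_norm_bounds_of_near hre (by
      rwa [show v - v₀ = 1 - v₀ - (1 - v) by ring])).2
  set D := 1 - z * Φ' (1 - v) with hD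
  have hDlow : s * ‖v₀‖ / 32 ≤ ‖D‖ := by
    have h1 := (hc _ hw).2
    rw [← norm_mul] at h1
    have h2 := norm_sub_norm_le (1 : ℂ) (z * Φ' (1 - v))
    rw [norm_one] at h2
    linarith
  have hD0 : 0 < ‖D‖ := hsv.trans_le hDlow
  have hDne : D ≠ 0 := norm_pos_iff.1 hD0
  have hsne : (s : ℂ) ≠ 0 := by exact_mod_cast hs.ne'
  have hDs : ‖D - s * v₀‖ ≤ (s * K₁ + 2 * M + s / 2) * ‖v₀‖ ^ (1 + δ) := by
    have e : D - s * v₀ = s * (v - v₀) - (Φ' (1 - v) - (1 - s * v))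
        + s / 2 * v₀ ^ 2 * Φ' (1 - v) := by rw [hD, hz]; ring
    have h1 := hE' v hw1.le
    have h2 := rpow_le_two_mul_rpow (norm_nonneg v) hv2 ha0.le hδ0 hδ1
    have h3 : ‖v₀‖ ^ 2 ≤ ‖v₀‖ ^ (1 + δ) := by
      rw [hpow1]; exact le_mul_of_one_le_right (by positivity) hP1
    rw [e]
    calc _ ≤ s * ‖v - v₀‖ + ‖Φ' (1 - v) - (1 - s * v)‖ + s / 2 * ‖v₀‖ ^ 2 * ‖Φ' (1 - v)‖ := by
          refine (norm_add_le _ _).trans (add_le_add ((norm_sub_le _ _).trans ?_) ?_)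
          · rw [norm_mul, Complex.norm_real, Real.norm_of_nonneg hs.le]
          · rw [norm_mul, norm_mul, norm_pow, norm_div, Complex.norm_real,
              Real.norm_of_nonneg hs.le]
            norm_num
      _ ≤ s * (K₁ * ‖v₀‖ ^ (1 + δ)) + M * (2 * ‖v₀‖ ^ (1 + δ)) + s / 2 * ‖v₀‖ ^ (1 + δ) * 1 := by
          gcongr
          · exact h1.trans (by gcongr)
          · exact hΦ' _ hw1
      _ = _ := by ring
  have hB : ‖1 / D - 1 / (s * v₀)‖ ≤ K₂ * ‖v₀‖ ^ (δ - 1) := by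
    have e : 1 / D - 1 / (s * v₀) = -(D - s * v₀) / (D * (s * v₀)) := by
      field_simp
      ring
    rw [e, norm_div, norm_neg, norm_mul, norm_mul, Complex.norm_real, Real.norm_of_nonneg hs.le,
      div_le_iff₀ (by positivity)]
    calc _ ≤ (s * K₁ + 2 * M + s / 2) * ‖v₀‖ ^ (1 + δ) := hDs
      _ = K₂ * ‖v₀‖ ^ (δ - 1) * (s * ‖v₀‖ / 32 * (s * ‖v₀‖)) := by
          rw [hpow1, hK₂]; field_simp
      _ ≤ _ := by gcongr
  have hC : ‖(Φ (1 - v) - 1) / D‖ ≤ 40 / s * ‖v₀‖ ^ (δ - 1) := by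
    rw [norm_div, div_le_iff₀ hD0]
    calc _ ≤ 5 / 4 * ‖v₀‖ := (hL v hw1).trans hv2
      _ = 40 / s * 1 * (s * ‖v₀‖ / 32) := by field_simp; norm_num
      _ ≤ _ := by gcongr
  have h40 : 0 ≤ 40 / s := by positivity
  refine ⟨?_, ?_, ?_⟩
  · refine hA.trans ?_
    gcongr
    linarith
  · refine hB.trans ?_
    gcongr
    linarith
  · have e : Φ (1 - v) / D - 1 / (s * v₀)
        = (Φ (1 - v) - 1) / D + (1 / D - 1 / (s * v₀)) := by ring
    rw [e]
    refine (norm_add_le _ _).trans ((add_le_add hC hB).trans ?_)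
    rw [← add_mul, add_comm (40 / s)]
    gcongr
    linarith

end LocalAnalysis

section DeltaDomain

variable {R : ℝ} {z : ℂ}

lemma mem_deltaDom_pi_div_three :
    z ∈ deltaDom R (Real.pi / 3) ↔ ‖z‖ < R ∧ z ≠ 1 ∧ (z - 1).re < ‖z - 1‖ / 2 := by
  refine and_congr_right fun _ => and_congr_right fun hz => ?_
  have hn : 0 < ‖z - 1‖ := norm_pos_iff.2 (sub_ne_zero.2 hz)
  have hπ := Real.pi_pos
  have h := Real.strictAntiOn_cos.lt_iff_gt (a := |Complex.arg (z - 1)|) (b := Real.pi / 3)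
    ⟨abs_nonneg _, Complex.abs_arg_le_pi _⟩ ⟨by linarith, by linarith⟩
  rw [← h, Real.cos_abs, Real.cos_pi_div_three, ← Complex.norm_mul_cos_arg]
  constructor <;> intro h <;> nlinarith

lemma isOpen_deltaDom_pi_div_three : IsOpen (deltaDom R (Real.pi / 3)) := by
  have : deltaDom R (Real.pi / 3)
      = {z : ℂ | ‖z‖ < R} ∩ ({1}ᶜ ∩ {z : ℂ | (z - 1).re < ‖z - 1‖ / 2}) :=
    Set.ext fun _ => mem_deltaDom_pi_div_three
  rw [this]
  refine (isOpen_lt (by fun_prop) (by fun_prop)).inter (isOpen_compl_singleton.inter ?_)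
  exact isOpen_lt (by fun_prop) (by fun_prop)

lemma mem_deltaDom_of_norm_lt_one (hR : 1 ≤ R) (hz : ‖z‖ < 1) :
    z ∈ deltaDom R (Real.pi / 3) := by
  have h1 : z ≠ 1 := fun h => by simp [h] at hz
  refine mem_deltaDom_pi_div_three.2 ⟨hz.trans_le hR, h1, ?_⟩
  have h2 := Complex.re_le_norm z
  have h3 : 0 < ‖z - 1‖ := norm_pos_iff.2 (sub_ne_zero.2 h1)
  rw [Complex.sub_re, Complex.one_re]
  linarith

lemma one_sub_mem_slitPlane (hz1 : z ≠ 1) (hz : (z - 1).re < ‖z - 1‖ / 2) :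
    1 - z ∈ Complex.slitPlane := by
  by_contra h
  rw [Complex.mem_slitPlane_iff] at h
  push Not at h
  obtain ⟨h1, h2⟩ := h
  have e : z - 1 = (((z - 1).re : ℝ) : ℂ) := by
    apply Complex.ext
    · simp
    · simp at h2 ⊢
      exact h2
  have h3 : ‖z - 1‖ = (z - 1).re := by
    rw [e, Complex.norm_real, Complex.ofReal_re, Real.norm_of_nonneg]
    simp at h1 ⊢
    exact h1
  have h4 : 0 < ‖z - 1‖ := norm_pos_iff.2 (sub_ne_zero.2 hz1)
  linarith

lemma cpow_half_sq (x : ℂ) : (x ^ ((1 : ℂ) / 2)) ^ 2 = x := by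
  rw [one_div]
  exact_mod_cast Complex.cpow_nat_inv_pow x two_ne_zero

lemma norm_cpow_half_sq (x : ℂ) : ‖x ^ ((1 : ℂ) / 2)‖ ^ 2 = ‖x‖ := by
  rw [← norm_pow, cpow_half_sq]

lemma cpow_half_re_nonneg (x : ℂ) : 0 ≤ (x ^ ((1 : ℂ) / 2)).re := by
  rcases eq_or_ne x 0 with rfl | hx
  · simp
  rw [Complex.cpow_def_of_ne_zero hx, Complex.exp_re]
  refine mul_nonneg (Real.exp_pos _).le (Real.cos_nonneg_of_mem_Icc ?_)
  have h : (Complex.log x * (1 / 2)).im = Complex.arg x / 2 := by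
    rw [show (1 / 2 : ℂ) = ((1 / 2 : ℝ) : ℂ) by push_cast; rfl, Complex.im_mul_ofReal,
      Complex.log_im]
    ring
  rw [h]
  constructor <;> linarith [Complex.neg_pi_lt_arg x, Complex.arg_le_pi x]

lemma norm_div_two_le_re_cpow_half (hz : (z - 1).re < ‖z - 1‖ / 2) :
    ‖(1 - z) ^ ((1 : ℂ) / 2)‖ / 2 ≤ ((1 - z) ^ ((1 : ℂ) / 2)).re := by
  set u := (1 - z) ^ ((1 : ℂ) / 2) with hu
  have h1 : u ^ 2 = 1 - z := cpow_half_sq _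
  have h2 : ‖u‖ ^ 2 = ‖z - 1‖ := by rw [norm_cpow_half_sq, norm_sub_rev]
  have h3 := congrArg Complex.re h1
  have h4 : ‖u‖ ^ 2 = u.re ^ 2 + u.im ^ 2 := by
    rw [Complex.sq_norm, Complex.normSq_apply]; ring
  rw [sq, Complex.mul_re, Complex.sub_re, Complex.one_re] at h3
  rw [Complex.sub_re, Complex.one_re] at hz
  refine abs_le_of_sq_le_sq' ?_ (cpow_half_re_nonneg _) |>.2
  nlinarith

end DeltaDomain

section Extension

variable {Φ Φ' y : ℂ → ℂ}

lemma exists_fixedPoint_away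
    (hd : ∀ w : ℂ, ‖w‖ < 1 → HasDerivAt Φ (Φ' w) w)
    (hΦ : ∀ w : ℂ, ‖w‖ < 1 → ‖Φ w‖ ≤ 1)
    (hΦ' : ∀ r : ℝ, 0 ≤ r → r < 1 → ∃ κ < 1, ∀ w : ℂ, ‖w‖ ≤ r → ‖Φ' w‖ ≤ κ)
    (hyc : ContinuousOn y (Metric.closedBall 0 1))
    (hy1 : ∀ z : ℂ, ‖z‖ ≤ 1 → z ≠ 1 → ‖y z‖ < 1)
    (hyf : ∀ z : ℂ, ‖z‖ ≤ 1 → y z = z * Φ (y z))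
    {ε ρ₁ : ℝ} (hε : 0 < ε) (hε1 : ε ≤ 1) (hρ₁0 : 0 ≤ ρ₁) (hρ₁ : ρ₁ < 1) :
    ∃ R ρ κ : ℝ, 1 < R ∧ R ≤ 2 ∧ ρ₁ ≤ ρ ∧ ρ < 1 ∧ κ < 1 ∧
      (∀ z w : ℂ, ‖z‖ < R → ‖w‖ ≤ ρ → ‖z‖ * ‖Φ' w‖ ≤ κ) ∧
      ∀ z : ℂ, ‖z‖ < R → ε ≤ ‖z - 1‖ → ∃ w, ‖w‖ ≤ ρ ∧ w = z * Φ w := by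
  obtain ⟨ρ₂, hρ₂, hyρ⟩ : ∃ ρ₂ < 1, ∀ z : ℂ, ‖z‖ ≤ 1 → ε / 2 ≤ ‖z - 1‖ → ‖y z‖ ≤ ρ₂ := by
    set T : Set ℂ := Metric.closedBall 0 1 ∩ {z | ε / 2 ≤ ‖z - 1‖} with hT
    have hTc : IsCompact T := (isCompact_closedBall 0 1).inter_right
      (isClosed_le (by fun_prop) (by fun_prop))
    have hTn : T.Nonempty := ⟨0, by simp [hT]; linarith⟩
    obtain ⟨z₀, hz₀, hmax⟩ := hTc.exists_isMaxOn hTn (hyc.mono Set.inter_subset_left).norm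
    refine ⟨‖y z₀‖, hy1 z₀ (mem_closedBall_zero_iff.1 hz₀.1) ?_, fun z hz hz' =>
      hmax ⟨mem_closedBall_zero_iff.2 hz, hz'⟩⟩
    rintro rfl
    have := hz₀.2
    simp at this
    linarith
  set ρ₃ := max ρ₁ ρ₂ with hρ₃
  have hρ₃1 : ρ₃ < 1 := max_lt hρ₁ hρ₂
  have hρ₃0 : 0 ≤ ρ₃ := hρ₁0.trans (le_max_left _ _)
  set r := (1 - ρ₃) / 2 with hr
  have hr0 : 0 < r := by linarith
  have hr1 : r ≤ 1 / 2 := by linarith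
  obtain ⟨κ, hκ1, hκ⟩ := hΦ' (ρ₃ + r) (by linarith) (by linarith)
  have hκ0 : 0 ≤ κ := (norm_nonneg _).trans (hκ 0 (by simp; linarith))
  set R := 1 + min (ε / 2) ((1 - κ) / 2 * r) with hR
  have hR1 : 1 < R := by
    have : 0 < (1 - κ) / 2 * r := mul_pos (by linarith) hr0
    have := lt_min (half_pos hε) this
    linarith
  have hR2 : R - 1 ≤ ε / 2 := by
    have := min_le_left (ε / 2) ((1 - κ) / 2 * r); linarith
  have hR3 : R - 1 ≤ (1 - κ) / 2 * r := by
    have := min_le_right (ε / 2) ((1 - κ) / 2 * r); linarith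
  have hcon : ∀ z w : ℂ, ‖z‖ < R → ‖w‖ ≤ ρ₃ + r → ‖z‖ * ‖Φ' w‖ ≤ (1 + κ) / 2 := fun z w hz hw => by
    calc ‖z‖ * ‖Φ' w‖ ≤ R * κ := by
          gcongr
          exact hκ w hw
      _ ≤ _ := by nlinarith
  refine ⟨R, ρ₃ + r, (1 + κ) / 2, hR1, by linarith, by linarith [le_max_left ρ₁ ρ₂],
    by linarith, by linarith, hcon, fun z hz hz' => ?_⟩
  rcases le_or_gt ‖z‖ 1 with h | h
  · exact ⟨y z, (hyρ z h (by linarith)).trans (by linarith [le_max_right ρ₁ ρ₂]), hyf z h⟩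
  have hzn : (‖z‖ : ℂ) ≠ 0 := by
    have : ‖z‖ ≠ 0 := by linarith
    exact_mod_cast this
  set z₁ : ℂ := z / ‖z‖ with hz₁
  have hz₁n : ‖z₁‖ = 1 := by
    rw [hz₁, norm_div, Complex.norm_real, norm_norm, div_self (by linarith)]
  have hzz : ‖z - z₁‖ ≤ R - 1 := by
    have e : z - z₁ = ((‖z‖ - 1 : ℝ) : ℂ) * z₁ := by
      rw [hz₁]; push_cast; field_simp
    rw [e, norm_mul, hz₁n, mul_one, Complex.norm_real, Real.norm_of_nonneg (by linarith)]
    linarith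
  have hz₁1 : ε / 2 ≤ ‖z₁ - 1‖ := by
    have := norm_sub_le_norm_sub_add_norm_sub z z₁ 1
    linarith
  have hyz₁ : ‖y z₁‖ ≤ ρ₃ := (hyρ z₁ hz₁n.le hz₁1).trans (le_max_right _ _)
  have hball : ∀ w ∈ Metric.closedBall (y z₁) r, ‖w‖ ≤ ρ₃ + r := fun w hw => by
    rw [mem_closedBall_iff_norm] at hw
    have := norm_le_norm_add_norm_sub' w (y z₁)
    linarith
  obtain ⟨w, hw, hwf⟩ := exists_fixedPoint_mem_closedBall (z := z) (c := y z₁) (r := r)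
    (κ := (1 + κ) / 2) hr0.le (by linarith)
    (fun w hw => hd w ((hball w hw).trans_lt (by linarith)))
    (fun w hw => hcon z w hz (hball w hw)) (by
      have e : z * Φ (y z₁) - y z₁ = (z - z₁) * Φ (y z₁) := by
        rw [sub_mul, ← hyf z₁ hz₁n.le]
      rw [e, norm_mul]
      calc _ ≤ (R - 1) * 1 := by
            gcongr
            exact hΦ _ (hyz₁.trans_lt hρ₃1)
        _ ≤ _ := by linarith)
  exact ⟨w, hball w hw, hwf⟩

end Extension

section Extension

variable {Φ Φ' y : ℂ → ℂ}

/-- Analytic continuation to a Δ-domain of a solution of `y z = z * Φ (y z)`, with square-root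
asymptotics at `1`. -/
theorem exists_deltaDom_extension {s M δ : ℝ} (hs : 0 < s) (hM : 0 ≤ M) (hδ0 : 0 < δ) (hδ1 : δ ≤ 1)
    (hd : ∀ w : ℂ, ‖w‖ < 1 → HasDerivAt Φ (Φ' w) w)
    (hΦ0 : Φ 0 ≠ 0)
    (hΦ : ∀ w : ℂ, ‖w‖ < 1 → ‖Φ w‖ ≤ 1)
    (hΦ' : ∀ r : ℝ, 0 ≤ r → r < 1 → ∃ κ < 1, ∀ w : ℂ, ‖w‖ ≤ r → ‖Φ' w‖ ≤ κ)
    (hL : ∀ v : ℂ, ‖1 - v‖ < 1 → ‖Φ (1 - v) - 1‖ ≤ ‖v‖)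
    (hE : ∀ v : ℂ, ‖1 - v‖ ≤ 1 → ‖Φ (1 - v) - (1 - v + s / 2 * v ^ 2)‖ ≤ M * ‖v‖ ^ (2 + δ))
    (hE' : ∀ v : ℂ, ‖1 - v‖ ≤ 1 → ‖Φ' (1 - v) - (1 - s * v)‖ ≤ M * ‖v‖ ^ (1 + δ))
    (hyc : ContinuousOn y (Metric.closedBall 0 1))
    (hy1 : ∀ z : ℂ, ‖z‖ ≤ 1 → z ≠ 1 → ‖y z‖ < 1)
    (hyf : ∀ z : ℂ, ‖z‖ ≤ 1 → y z = z * Φ (y z)) :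
    ∃ (R C : ℝ) (Y : ℂ → ℂ), 1 < R ∧ (∀ z : ℂ, ‖z‖ < 1 → Y z = y z) ∧
      DifferentiableOn ℂ Y (deltaDom R (Real.pi / 3)) ∧
      ∀ z ∈ deltaDom R (Real.pi / 3),
        ‖Y z - (1 - ((√2 / √s : ℝ) : ℂ) * (1 - z) ^ ((1 : ℂ) / 2))‖
          ≤ C * ‖1 - z‖ ^ ((1 + δ) / 2) ∧
        ‖deriv Y z - 1 / (s * (((√2 / √s : ℝ) : ℂ) * (1 - z) ^ ((1 : ℂ) / 2)))‖
          ≤ C * ‖1 - z‖ ^ ((δ - 1) / 2) ∧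
        ‖z * deriv Y z / Y z - 1 / (s * (((√2 / √s : ℝ) : ℂ) * (1 - z) ^ ((1 : ℂ) / 2)))‖
          ≤ C * ‖1 - z‖ ^ ((δ - 1) / 2) := by
  set c : ℝ := √2 / √s with hc
  have hc0 : 0 < c := by positivity
  have hc2 : s * c ^ 2 = 2 := by
    rw [hc, div_pow, Real.sq_sqrt (by norm_num), Real.sq_sqrt hs.le]; field_simp
  set v₀ : ℂ → ℂ := fun z => (c : ℂ) * (1 - z) ^ ((1 : ℂ) / 2) with hv₀
  have hv₀n : ∀ z, ‖v₀ z‖ = c * ‖(1 - z) ^ ((1 : ℂ) / 2)‖ := fun z => by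
    rw [hv₀, norm_mul, Complex.norm_real, Real.norm_of_nonneg hc0.le]
  have hv₀sq : ∀ z, s * ‖v₀ z‖ ^ 2 = 2 * ‖z - 1‖ := fun z => by
    rw [hv₀n, mul_pow, norm_cpow_half_sq, norm_sub_rev, ← mul_assoc, hc2]
  have hv₀z : ∀ z, 1 - (s : ℂ) / 2 * v₀ z ^ 2 = z := fun z => by
    have : (s : ℂ) * (c : ℂ) ^ 2 = 2 := by exact_mod_cast hc2
    rw [hv₀, mul_pow, cpow_half_sq]
    linear_combination (-(1 - z) / 2) * this
  have hv₀pow : ∀ (z : ℂ) (β : ℝ), ‖v₀ z‖ ^ β = c ^ β * ‖1 - z‖ ^ (β / 2) := fun z β => by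
    rw [hv₀n, Real.mul_rpow hc0.le (norm_nonneg _)]
    congr 1
    rw [← norm_cpow_half_sq (1 - z), ← Real.rpow_natCast, ← Real.rpow_mul (norm_nonneg _)]
    congr 1
    push_cast
    ring
  -- the radius of the neighbourhood of `1` on which the local analysis applies
  obtain ⟨a, ha0, ha1, hsa, hMa⟩ : ∃ a : ℝ, 0 < a ∧ a ≤ 1 / 16 ∧ s * a ≤ 4 / 25 ∧
      (M + s / 2) * a ^ δ ≤ s / 256 := by
    have t1 : ∀ᶠ a : ℝ in nhdsWithin 0 (Set.Ioi 0), a ≤ 1 / 16 := by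
      filter_upwards [Ioo_mem_nhdsGT (show (0 : ℝ) < 1 / 16 by norm_num)] with a ha using ha.2.le
    have t2 : ∀ᶠ a : ℝ in nhdsWithin 0 (Set.Ioi 0), s * a ≤ 4 / 25 := by
      have : Filter.Tendsto (fun a : ℝ => s * a) (nhdsWithin 0 (Set.Ioi 0)) (nhds (s * 0)) :=
        (Continuous.tendsto (by fun_prop) 0).mono_left nhdsWithin_le_nhds
      exact this.eventually_le_const (by norm_num)
    have t3 : ∀ᶠ a : ℝ in nhdsWithin 0 (Set.Ioi 0), (M + s / 2) * a ^ δ ≤ s / 256 := by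
      have : Filter.Tendsto (fun a : ℝ => (M + s / 2) * a ^ δ) (nhdsWithin 0 (Set.Ioi 0))
          (nhds ((M + s / 2) * 0 ^ δ)) :=
        (((Real.continuousAt_rpow_const 0 δ (Or.inr hδ0.le)).tendsto).const_mul _).mono_left
          nhdsWithin_le_nhds
      refine this.eventually_le_const ?_
      rw [Real.zero_rpow hδ0.ne']
      linarith
    have t0 : ∀ᶠ a : ℝ in nhdsWithin 0 (Set.Ioi 0), 0 < a := self_mem_nhdsWithin
    obtain ⟨a, h1, h2, h3, h4⟩ := (t0.and (t1.and (t2.and t3))).exists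
    exact ⟨a, h1, h2, h3, h4⟩
  set ε := s * a ^ 2 / 2 with hε
  have hε0 : 0 < ε := by positivity
  have hε1 : ε < 1 := by
    have : s * a * a ≤ 4 / 25 * (1 / 16) := by gcongr
    nlinarith
  have hsmall : ∀ z, ‖z - 1‖ < ε → ‖v₀ z‖ ≤ a := fun z hz => by
    refine abs_le_of_sq_le_sq' ?_ ha0.le |>.2
    have := hv₀sq z
    refine le_of_mul_le_mul_left ?_ hs
    linarith
  have hlarge : ∀ z, ε / 2 ≤ ‖z - 1‖ → a / 2 ≤ ‖v₀ z‖ := fun z hz => by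
    refine abs_le_of_sq_le_sq' ?_ (norm_nonneg _) |>.2
    have := hv₀sq z
    refine le_of_mul_le_mul_left ?_ hs
    have : 0 < s * a ^ 2 := by positivity
    nlinarith
  have hsm : ∀ z, ‖z - 1‖ < ε → ‖v₀ z‖ ≤ 1 / 16 ∧ s * ‖v₀ z‖ ≤ 4 / 25 ∧
      (M + s / 2) * ‖v₀ z‖ ^ δ ≤ s / 256 := fun z hz => by
    have h := hsmall z hz
    refine ⟨h.trans ha1, le_trans (by gcongr) hsa, le_trans (by gcongr) hMa⟩
  obtain ⟨R, ρ, κ, hR1, hR2, hρ₁, hρ1, hκ1, hκ, hfar⟩ := exists_fixedPoint_away hd hΦ hΦ' hyc hy1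
    hyf hε0 hε1.le (ρ₁ := 1 - a / 16) (by linarith) (by linarith)
  have hΔ : ∀ z ∈ deltaDom R (Real.pi / 3), v₀ z ≠ 0 ∧ ‖v₀ z‖ / 2 ≤ (v₀ z).re ∧
      ContinuousAt v₀ z := fun z hz => by
    obtain ⟨-, hz1, hzre⟩ := mem_deltaDom_pi_div_three.1 hz
    refine ⟨?_, ?_, ?_⟩
    · have h : 0 < ‖z - 1‖ := norm_pos_iff.2 (sub_ne_zero.2 hz1)
      intro h0
      have := hv₀sq z
      rw [h0] at this
      simp at this
      exact hz1 (sub_eq_zero.1 this)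
    · rw [hv₀n, hv₀, Complex.re_ofReal_mul, mul_div_assoc]
      gcongr
      exact norm_div_two_le_re_cpow_half hzre
    · refine continuousAt_const.mul ?_
      exact ContinuousAt.cpow (by fun_prop) continuousAt_const (one_sub_mem_slitPlane hz1 hzre)
  have hΔo := isOpen_deltaDom_pi_div_three (R := R)
  have hex : ∀ z ∈ deltaDom R (Real.pi / 3), ∃ w, ‖w‖ < 1 ∧ w = z * Φ w ∧
      (‖z - 1‖ < ε → w ∈ Metric.closedBall (1 - v₀ z) (‖v₀ z‖ / 8)) ∧
      (ε / 2 ≤ ‖z - 1‖ → ‖w‖ ≤ ρ) := fun z hz => by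
    rcases lt_or_ge ‖z - 1‖ ε with h | h
    · obtain ⟨h1, h2, h3⟩ := hsm z h
      obtain ⟨h4, h5, -⟩ := hΔ z hz
      obtain ⟨w, hw, hwf⟩ := local_exists_fixedPoint hs hM hδ0 hδ1 hd hL hE hE' h4 h5 h1 h2 h3
      have hw' := (local_contraction hs hM hδ0 hδ1 hE' h4 h5 h1 h2 h3
        (Metric.closedBall_subset_closedBall (by linarith [norm_nonneg (v₀ z)]) hw)).1
      have h6 : 0 < ‖v₀ z‖ := norm_pos_iff.2 h4
      rw [hv₀z] at hwf
      exact ⟨w, by linarith, hwf, fun _ => hw, fun h' => by linarith [hlarge z h']⟩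
    · obtain ⟨w, hw, hwf⟩ := hfar z (mem_deltaDom_pi_div_three.1 hz).1 h
      exact ⟨w, by linarith, hwf, fun h' => absurd h' (by linarith), fun _ => hw⟩
  choose! Y hY1 hYf hYnear hYfar using hex
  have hYy : ∀ z : ℂ, ‖z‖ < 1 → Y z = y z := fun z hz => by
    have hzΔ := mem_deltaDom_of_norm_lt_one hR1.le hz
    have hyz := hy1 z hz.le (fun h => by simp [h] at hz)
    set r := max ‖Y z‖ ‖y z‖ with hr
    have hr1 : r < 1 := max_lt (hY1 z hzΔ) hyz
    obtain ⟨κ', hκ'1, hκ'⟩ := hΦ' r ((norm_nonneg _).trans (le_max_left _ _)) hr1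
    refine eq_of_fixedPoint (convex_closedBall (0 : ℂ) r)
      (fun w hw => hd w ((mem_closedBall_zero_iff.1 hw).trans_lt hr1)) hκ'1 (fun w hw => ?_)
      (mem_closedBall_zero_iff.2 (le_max_left _ _)) (mem_closedBall_zero_iff.2 (le_max_right _ _))
      (hYf z hzΔ) (hyf z hz.le)
    exact (mul_le_of_le_one_left (norm_nonneg _) hz.le).trans (hκ' w (mem_closedBall_zero_iff.1 hw))
  have hYd : ∀ z ∈ deltaDom R (Real.pi / 3),
      HasDerivAt Y (Φ (Y z) / (1 - z * Φ' (Y z))) z := fun z hz => by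
    have hev : ∀ᶠ z' in nhds z, z' ∈ deltaDom R (Real.pi / 3) := hΔo.mem_nhds hz
    have hevf : ∀ᶠ z' in nhds z, Y z' = z' * Φ (Y z') := hev.mono hYf
    rcases lt_or_ge ‖z - 1‖ ε with h | h
    · obtain ⟨h1, h2, h3⟩ := hsm z h
      obtain ⟨h4, h5, h6⟩ := hΔ z hz
      have h7 : 0 < ‖v₀ z‖ := norm_pos_iff.2 h4
      have hcon := fun w hw => local_contraction hs hM hδ0 hδ1 hE' h4 h5 h1 h2 h3 (w := w) hw
      rw [hv₀z] at hcon
      have hwlt : ∀ w ∈ Metric.closedBall (1 - v₀ z) (‖v₀ z‖ / 4), ‖w‖ < 1 := fun w hw =>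
        (hcon w hw).1.trans_lt (by linarith)
      refine hasDerivAt_of_fixedPoint (convex_closedBall (1 - v₀ z) (‖v₀ z‖ / 4))
        (fun w hw => hd w (hwlt w hw)) (fun w hw => hΦ w (hwlt w hw)) hΦ0
        (κ := 1 - s * ‖v₀ z‖ / 32) (by linarith [mul_pos hs h7]) (fun w hw => (hcon w hw).2) ?_ hevf
      have e1 : ∀ᶠ z' in nhds z, ‖z' - 1‖ < ε :=
        ContinuousAt.eventually_lt (by fun_prop) continuousAt_const h
      have e2 : ∀ᶠ z' in nhds z, ‖v₀ z' - v₀ z‖ < ‖v₀ z‖ / 16 := by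
        have := Metric.tendsto_nhds.1 h6 (‖v₀ z‖ / 16) (by positivity)
        simpa only [dist_eq_norm] using this
      filter_upwards [hev, e1, e2] with z' he h1' h2'
      have h8 := hYnear z' he h1'
      rw [mem_closedBall_iff_norm] at h8 ⊢
      have h9 := norm_sub_norm_le (v₀ z') (v₀ z)
      have h10 : Y z' - (1 - v₀ z) = (Y z' - (1 - v₀ z')) - (v₀ z' - v₀ z) := by ring
      rw [h10]
      refine (norm_sub_le _ _).trans ?_
      linarith
    · refine hasDerivAt_of_fixedPoint (convex_closedBall (0 : ℂ) ρ)
        (fun w hw => hd w ((mem_closedBall_zero_iff.1 hw).trans_lt hρ1))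
        (fun w hw => hΦ w ((mem_closedBall_zero_iff.1 hw).trans_lt hρ1)) hΦ0 hκ1
        (fun w hw => hκ z w (mem_deltaDom_pi_div_three.1 hz).1 (mem_closedBall_zero_iff.1 hw)) ?_
        hevf
      have e1 : ∀ᶠ z' in nhds z, ε / 2 < ‖z' - 1‖ :=
        ContinuousAt.eventually_lt continuousAt_const (by fun_prop) (by linarith)
      filter_upwards [hev, e1] with z' he h1'
      exact mem_closedBall_zero_iff.2 (hYfar z' he h1'.le)
  have hYlog : ∀ z ∈ deltaDom R (Real.pi / 3), z ≠ 0 →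
      z * deriv Y z / Y z = 1 / (1 - z * Φ' (Y z)) := fun z hz hz0 => by
    have hne : Φ (Y z) ≠ 0 := fun h => by
      have h' := hYf z hz
      rw [h, mul_zero] at h'
      rw [h'] at h
      exact hΦ0 h
    rw [(hYd z hz).deriv]
    nth_rw 3 [hYf z hz]
    field_simp
  obtain ⟨K, hK0, hK⟩ := local_estimates hs hM hδ0 hδ1 hd hL (fun w hw => by
    obtain ⟨κ', hκ'1, hκ'⟩ := hΦ' ‖w‖ (norm_nonneg _) hw
    exact (hκ' w le_rfl).trans hκ'1.le) hE hE'
  set C₁ := K * c ^ (1 + δ) + K * c ^ (δ - 1) with hC₁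
  set C₂ := (3 + 6 / s) / ε + 3 * (1 / (1 - κ) + 2 / (s * a)) with hC₂
  have hκ1' : 0 < 1 - κ := by linarith
  have hC₁0 : 0 ≤ C₁ := by positivity
  have hC₂0 : 0 ≤ C₂ := by positivity
  refine ⟨R, C₁ + C₂, Y, hR1, hYy, fun z hz => (hYd z hz).differentiableAt.differentiableWithinAt,
    fun z hz => ?_⟩
  change ‖Y z - (1 - v₀ z)‖ ≤ _ ∧ ‖deriv Y z - 1 / (s * v₀ z)‖ ≤ _ ∧
    ‖z * deriv Y z / Y z - 1 / (s * v₀ z)‖ ≤ _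
  rcases lt_or_ge ‖z - 1‖ ε with h | h
  · obtain ⟨h1, h2, h3⟩ := hsm z h
    obtain ⟨h4, h5, -⟩ := hΔ z hz
    have hz0 : z ≠ 0 := fun h0 => by
      rw [h0] at h
      simp at h
      linarith
    have hest := hK (v₀ z) h4 h5 h1 h2 h3 (Y z)
      (Metric.closedBall_subset_closedBall (by linarith [norm_nonneg (v₀ z)]) (hYnear z hz h))
    rw [hv₀z, hv₀pow, hv₀pow] at hest
    obtain ⟨e1, e2, e3⟩ := hest (hYf z hz)
    rw [hYlog z hz hz0, (hYd z hz).deriv]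
    have g1 : K * c ^ (1 + δ) ≤ C₁ + C₂ := by
      have : 0 ≤ K * c ^ (δ - 1) := by positivity
      linarith
    have g2 : K * c ^ (δ - 1) ≤ C₁ + C₂ := by
      have : 0 ≤ K * c ^ (1 + δ) := by positivity
      linarith
    refine ⟨e1.trans ?_, e3.trans ?_, e2.trans ?_⟩ <;> rw [← mul_assoc] <;> gcongr
  · have hzR := (mem_deltaDom_pi_div_three.1 hz).1
    have hn : ‖1 - z‖ ≤ 3 := (norm_sub_le _ _).trans (by rw [norm_one]; linarith)
    have hn0 : ε ≤ ‖1 - z‖ := by rwa [norm_sub_rev]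
    have hYρ := hYfar z hz (by linarith)
    have hv₀low := hlarge z (by linarith)
    have hp1 : ε ≤ ‖1 - z‖ ^ ((1 + δ) / 2) := by
      calc ε = ε ^ (1 : ℝ) := (Real.rpow_one _).symm
        _ ≤ ε ^ ((1 + δ) / 2) := Real.rpow_le_rpow_of_exponent_ge hε0 hε1.le (by linarith)
        _ ≤ _ := by gcongr
    have hp2 : 1 / 3 ≤ ‖1 - z‖ ^ ((δ - 1) / 2) := by
      calc (1 / 3 : ℝ) = 3 ^ (-1 : ℝ) := by rw [Real.rpow_neg_one]; norm_num
        _ ≤ 3 ^ ((δ - 1) / 2) := Real.rpow_le_rpow_of_exponent_le (by norm_num) (by linarith)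
        _ ≤ _ := Real.rpow_le_rpow_of_nonpos (by linarith) hn (by linarith)
    have hden : 1 - κ ≤ ‖1 - z * Φ' (Y z)‖ := by
      have h1 := hκ z (Y z) hzR hYρ
      rw [← norm_mul] at h1
      have h2 := norm_sub_norm_le (1 : ℂ) (z * Φ' (Y z))
      rw [norm_one] at h2
      linarith
    have hinv : ‖1 / (s * v₀ z)‖ ≤ 2 / (s * a) := by
      rw [norm_div, norm_one, norm_mul, Complex.norm_real, Real.norm_of_nonneg hs.le]
      calc 1 / (s * ‖v₀ z‖) ≤ 1 / (s * (a / 2)) := by gcongr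
        _ = _ := by field_simp
    have hbd : ∀ x : ℂ, ‖x‖ ≤ 1 / (1 - κ) →
        ‖x - 1 / (s * v₀ z)‖ ≤ (C₁ + C₂) * ‖1 - z‖ ^ ((δ - 1) / 2) := fun x hx => by
      have h1 : 0 ≤ (3 + 6 / s) / ε := by positivity
      have h2 : 3 * (1 / (1 - κ) + 2 / (s * a)) ≤ C₁ + C₂ := by linarith
      calc _ ≤ 1 / (1 - κ) + 2 / (s * a) := (norm_sub_le _ _).trans (add_le_add hx hinv)
        _ = 3 * (1 / (1 - κ) + 2 / (s * a)) * (1 / 3) := by ring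
        _ ≤ _ := by gcongr
    refine ⟨?_, hbd _ ?_, hbd _ ?_⟩
    · have h1 : ‖v₀ z‖ ≤ 1 + 6 / s := by
        have h2 : ‖v₀ z‖ ^ 2 ≤ 6 / s := by
          rw [le_div_iff₀ hs, mul_comm, hv₀sq, norm_sub_rev]; linarith
        nlinarith [sq_nonneg (‖v₀ z‖ - 1)]
      have h3 : ‖Y z - (1 - v₀ z)‖ ≤ 3 + 6 / s := by
        refine (norm_sub_le _ _).trans ?_
        have := norm_sub_le 1 (v₀ z)
        rw [norm_one] at this
        linarith
      have h4 : (3 + 6 / s) / ε ≤ C₁ + C₂ := by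
        have : 0 ≤ 3 * (1 / (1 - κ) + 2 / (s * a)) := by positivity
        linarith
      calc _ ≤ 3 + 6 / s := h3
        _ = (3 + 6 / s) / ε * ε := by field_simp
        _ ≤ _ := by gcongr
    · rw [(hYd z hz).deriv, norm_div]
      gcongr
      exact hΦ _ (hY1 z hz)
    · rcases eq_or_ne z 0 with hz0 | hz0
      · simp only [hz0, zero_mul, zero_div, norm_zero]
        positivity
      · rw [hYlog z hz hz0, norm_div, norm_one]
        gcongr

end Extension

lemma norm_pgf_one_sub_sub_one_le {p : ℕ → ℝ} (hp : ∀ k, 0 ≤ p k) (hs : HasSum p 1)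
    (hs1 : HasSum (fun k : ℕ => (k : ℝ) * p k) 1) {v : ℂ} (hv : ‖1 - v‖ ≤ 1) :
    ‖pgf p (1 - v) - 1‖ ≤ ‖v‖ := by
  have h := (summable_pgf hp hs.summable hv).hasSum.sub (Complex.hasSum_ofReal.2 hs)
  have e : pgf p (1 - v) - 1 = ∑' k : ℕ, (p k : ℂ) * ((1 - v) ^ k - 1) := by
    convert h.tsum_eq.symm using 1
    · push_cast [pgf]; ring
    · refine tsum_congr fun k => ?_
      ring
  rw [e]
  refine tsum_of_norm_bounded (g := fun k : ℕ => (k : ℝ) * p k * ‖v‖) ?_ fun k => ?_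
  · simpa using hs1.mul_right ‖v‖
  rw [norm_mul, Complex.norm_real, Real.norm_of_nonneg (hp k)]
  calc _ ≤ p k * (k * ‖v‖) :=
        mul_le_mul_of_nonneg_left (norm_one_sub_pow_sub_one_le hv k) (hp k)
    _ = _ := by ring

lemma hasSum_of_tsum_ne_zero {f : ℕ → ℝ} (hf : ∑' n, f n ≠ 0) : HasSum f (∑' n, f n) := by
  refine Summable.hasSum ?_
  by_contra h
  exact hf (tsum_eq_zero_of_not_summable h)

lemma one_div_sqrt_mul_eq {s : ℝ} (hs : 0 < s) (z : ℂ) :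
    1 / (s * (((√2 / √s : ℝ) : ℂ) * z ^ ((1 : ℂ) / 2)))
      = (((√2)⁻¹ / √s : ℝ) : ℂ) * z ^ (-(1 : ℂ) / 2) := by
  have h : ((√2)⁻¹ / √s : ℝ) = (s * (√2 / √s))⁻¹ := by
    have h2 : 0 < √2 := by positivity
    have h3 : 0 < √s := Real.sqrt_pos.2 hs
    have h4 : √s ^ 2 = s := Real.sq_sqrt hs.le
    field_simp
    rw [h4]
  rw [h, neg_div, Complex.cpow_neg, ← mul_assoc, one_div, mul_inv]
  push_cast
  rfl

lemma pgf_zero (p : ℕ → ℝ) : pgf p 0 = p 0 := by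
  rw [pgf, tsum_eq_single 0 fun k hk => by simp [hk]]
  simp

/-- Under the hypotheses of Lemma 2.4 (`Lgdy`), the tree-size generating
function extends analytically to a Δ-domain, where
`Y(z) = 1 − √2 σ⁻¹ (1−z)^{1/2} + O(|1−z|^{(1+δ)/2})`,
`Y'(z) = 2^{-1/2} σ⁻¹ (1−z)^{-1/2} + O(|1−z|^{(δ−1)/2})`, and
`z·Y'(z)/Y(z) = 2^{-1/2} σ⁻¹ (1−z)^{-1/2} + O(|1−z|^{(δ−1)/2})`. -/
theorem stmt3
    (p : ℕ → ℝ) (hp : ∀ k, 0 ≤ p k)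
    (hpsum : ∑' k, p k = 1)
    (hcrit : ∑' k : ℕ, (k : ℝ) * p k = 1)
    (hspan : ∀ d : ℕ, (∀ k, p k ≠ 0 → d ∣ k) → d = 1)
    (hσpos : 0 < ∑' k : ℕ, (k : ℝ) * ((k : ℝ) - 1) * p k)
    (δ : ℝ) (hδ0 : 0 < δ) (hδ1 : δ ≤ 1)
    (hmom : Summable (fun k : ℕ => (k : ℝ) ^ ((2:ℝ) + δ) * p k))
    (q : ℕ → ℝ) (hq0 : q 0 = 0) (hqnn : ∀ n, 0 ≤ q n)
    (hqsum : ∑' n, q n = 1)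
    (hfix : ∀ z ∈ Set.Icc (0:ℝ) 1,
      (∑' n, q n * z ^ n) = z * ∑' k, p k * (∑' n, q n * z ^ n) ^ k) :
    ∃ (R θ C : ℝ) (Y : ℂ → ℂ), 1 < R ∧ θ ∈ Set.Ioo 0 (Real.pi / 2) ∧
      (∀ z : ℂ, ‖z‖ < 1 → Y z = ∑' n : ℕ, (q n : ℂ) * z ^ n) ∧
      DifferentiableOn ℂ Y (deltaDom R θ) ∧
      (∀ z ∈ deltaDom R θ,
        ‖Y z - (1 - ((Real.sqrt 2 / Real.sqrt (∑' k : ℕ, (k : ℝ) * ((k : ℝ) - 1) * p k) : ℝ) : ℂ)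
            * (1 - z) ^ ((1:ℂ)/2))‖ ≤ C * ‖1 - z‖ ^ ((1 + δ)/2) ∧
        ‖deriv Y z - (((Real.sqrt 2)⁻¹ / Real.sqrt (∑' k : ℕ, (k : ℝ) * ((k : ℝ) - 1) * p k) : ℝ) : ℂ)
            * (1 - z) ^ (-(1:ℂ)/2)‖ ≤ C * ‖1 - z‖ ^ ((δ - 1)/2) ∧
        ‖z * deriv Y z / Y z -
            (((Real.sqrt 2)⁻¹ / Real.sqrt (∑' k : ℕ, (k : ℝ) * ((k : ℝ) - 1) * p k) : ℝ) : ℂ)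
            * (1 - z) ^ (-(1:ℂ)/2)‖ ≤ C * ‖1 - z‖ ^ ((δ - 1)/2)) := by
  have hs : HasSum p 1 := by
    simpa only [hpsum] using hasSum_of_tsum_ne_zero (hpsum.trans_ne one_ne_zero)
  have hs1 : HasSum (fun k : ℕ => (k : ℝ) * p k) 1 := by
    simpa only [hcrit] using hasSum_of_tsum_ne_zero (hcrit.trans_ne one_ne_zero)
  have hqs : HasSum q 1 := by
    simpa only [hqsum] using hasSum_of_tsum_ne_zero (hqsum.trans_ne one_ne_zero)
  have hs2 := hasSum_of_tsum_ne_zero hσpos.ne'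
  have hM := hmom.hasSum
  have hM0 : 0 ≤ ∑' k : ℕ, (k : ℝ) ^ ((2:ℝ) + δ) * p k :=
    tsum_nonneg fun k => mul_nonneg (by positivity) (hp k)
  have hp0 : p 0 ≠ 0 := coeff_zero_ne_zero hp hs hs1 hσpos
  obtain ⟨j, hj, hpj⟩ := exists_two_le_coeff_pos hp hσpos
  have hyf : ∀ z : ℂ, ‖z‖ ≤ 1 → pgf q z = z * pgf p (pgf q z) := fun z hz =>
    pgf_fixedPoint hp hs.summable hq0 hqnn hqs hfix hz
  obtain ⟨R, C, Y, hR, hY, hd, hb⟩ := exists_deltaDom_extension (Φ := pgf p) (Φ' := pgfDeriv p)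
    (y := pgf q) hσpos (mul_nonneg zero_le_two hM0) hδ0 hδ1
    (fun w hw => hasDerivAt_pgf hp hs.summable hs1.summable hw)
    (by simpa [pgf_zero p] using hp0)
    (fun w hw => norm_pgf_le_one hp hs hw.le)
    (fun r hr0 hr => exists_norm_pgfDeriv_le hp hs1 hj hpj hr0 hr)
    (fun v hv => norm_pgf_one_sub_sub_one_le hp hs hs1 hv.le)
    (fun v hv => pgf_expansion hp hs hs1 hs2 hδ0 hδ1 hM hv)
    (fun v hv => pgfDeriv_expansion hp hs1 hs2 hδ0 hδ1 hM hv)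
    (continuousOn_pgf hqnn hqs.summable)
    (fun z hz hz1 =>
      norm_pgf_lt_one_of_fixedPoint hp hs hp0 hspan hq0 hqnn hqs hyf hz hz1)
    hyf
  simp only [one_div_sqrt_mul_eq hσpos] at hb
  exact ⟨R, Real.pi / 3, C, Y, hR, ⟨by positivity, by linarith [Real.pi_pos]⟩, hY, hd, hb⟩
end
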